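/- arXiv:1410.7910 — 2 statements merged into one kernel-verified Lean document; each statement's English description precedes it below -/
import Mathlib

section
/- The expectation of 2 raised to the total number of loops and parallel-edge pairs in the random cubic configuration-model multigraph converges to e²: as N → ∞ through even values of N, the average over ω ∈ Ω_N of 2^{X_{N,1}(ω) + X_{N,2}(ω)} tends to e². -/
open Filter Real Topology

/-- `Omega N`: the perfect matchings of the `3N` half-edges, i.e. fixed-point-free
involutions of `Fin (3N)`. -/
def Omega (N : ℕ) : Type := {ω : Equiv.Perm (Fin (3 * N)) // ∀ a, ω (ω a) = a ∧ ω a ≠ a}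

instance (N : ℕ) : Fintype (Omega N) := by unfold Omega; exact Subtype.fintype _

/-- The block (vertex) containing a half-edge: `B_v = {3v, 3v+1, 3v+2}`. -/
def blk {N : ℕ} (a : Fin (3 * N)) : Fin N := ⟨a.val / 3, by have := a.isLt; omega⟩

/-- The multiplicity of the pair of blocks `{u, v}` in the multigraph `Γ(ω)`:
for `u ≠ v` the number of half-edges in `B_u` matched into `B_v`; for `u = v`
the number of matched pairs contained in `B_u` (loops at `u`). -/
noncomputable def mult {N : ℕ} (ω : Omega N) (u v : Fin N) : ℕ :=
  if u = v then Nat.card {a : Fin (3 * N) // blk a = u ∧ blk (ω.val a) = u} / 2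
  else Nat.card {a : Fin (3 * N) // blk a = u ∧ blk (ω.val a) = v}

/-- `X_{N,1}`: the number of matched pairs contained in a single block (loops).
Each such pair `{a, ω a}` contributes its two half-edges, whence the division by 2. -/
noncomputable def X1 {N : ℕ} (ω : Omega N) : ℕ :=
  Nat.card {a : Fin (3 * N) // blk (ω.val a) = blk a} / 2

/-- `X_{N,2}`: the number of unordered pairs of distinct matched pairs joining the same
two distinct blocks: over each unordered pair of distinct blocks of multiplicity `m`
there are `C(m, 2)` such pairs of parallel edges. -/
noncomputable def X2 {N : ℕ} (ω : Omega N) : ℕ :=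
  ∑ u : Fin N, ∑ v : Fin N, if u < v then Nat.choose (mult ω u v) 2 else 0

/-!
Reveal the vertices one at a time and write the factor contributed by a new vertex as
`1 + (s - 1) [loop] + ∑ u, (t ^ (d u).choose 2 - 1)`, with `d u` its multiplicity to the earlier
vertex `u`. The expansion has no mixed terms: with three half-edges a vertex cannot have a loop and
a multiple edge, nor two multiple edges, and for the same reason the partner `u` contributes nothing
else. So the expected weight is a sum over partitions of the vertices into free ones, loops and
pairs, that is, with `H_n (a, b) = involutionSum a b n`, the value of the polynomial
`H_N (1 + α X, β X ^ 2 + γ X ^ 3)`, where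
`α = 3 (s - 1)`, `β = 18 (t - 1)`, `γ = 6 (t ^ 3 - 3 t + 2)`, when `X ^ k` is replaced by the
probability `1 / ((M - 1) (M - 3) ⋯ (M - 2k + 1))`, `M = 3 N`, of `k` prescribed edges. Sorting by
the number `m` of vertices that are not free gives `∑ m, N.choose m * X ^ m * H_m (α, β + γ X)`,
whose `m`-th term tends to `3 ^ (-m) * H_m (α, β) / m!`; by dominated convergence the sum tends to
`exp (α / 3 + β / 18) = exp ((s - 1) + (t - 1))`.
-/

section InvolutionSum

open Finset

variable {R S : Type*} [CommSemiring R] [CommSemiring S]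

/-- The weighted involution numbers: the sum over all partitions of an `n`-element set into
singletons of weight `a` and pairs of weight `b`, with exponential generating function
`exp (a z + b z ^ 2 / 2)`. -/
def involutionSum (a b : R) : ℕ → R
  | 0 => 1
  | 1 => a
  | n + 2 => a * involutionSum a b (n + 1) + (n + 1) * b * involutionSum a b n

lemma involutionSum_succ (a b : R) (n : ℕ) :
    involutionSum a b (n + 1) = a * involutionSum a b n + n * b * involutionSum a b (n - 1) := by
  cases n <;> simp [involutionSum]

lemma map_involutionSum (f : R →+* S) (a b : R) (n : ℕ) :
    f (involutionSum a b n) = involutionSum (f a) (f b) n := by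
  induction n using Nat.twoStepInduction with
  | zero => simp [involutionSum]
  | one => simp [involutionSum]
  | more n ih₀ ih₁ => simp [involutionSum, ih₀, ih₁]

lemma involutionSum_nonneg {a b : ℝ} (ha : 0 ≤ a) (hb : 0 ≤ b) (n : ℕ) :
    0 ≤ involutionSum a b n := by
  induction n using Nat.twoStepInduction with
  | zero => simp [involutionSum]
  | one => simpa [involutionSum]
  | more n ih₀ ih₁ => rw [involutionSum]; positivity

lemma involutionSum_mul_sq (c a b : R) (n : ℕ) :
    involutionSum (c * a) (c ^ 2 * b) n = c ^ n * involutionSum a b n := by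
  induction n using Nat.twoStepInduction with
  | zero => simp [involutionSum]
  | one => simp [involutionSum]
  | more n ih₀ ih₁ => rw [involutionSum, involutionSum, ih₀, ih₁]; ring

lemma involutionSum_add (c a b : R) (n : ℕ) :
    involutionSum (c + a) b n =
      ∑ ij ∈ antidiagonal n, (n.choose ij.1 : R) * (c ^ ij.1 * involutionSum a b ij.2) := by
  induction n using Nat.twoStepInduction with
  | zero => simp [involutionSum]
  | one => norm_num [involutionSum, Nat.antidiagonal_succ, add_comm]
  | more n ih₀ ih₁ =>
    have pairs : ∑ ij ∈ antidiagonal (n + 1),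
          ((n + 1).choose ij.1 : R) * (c ^ ij.1 * (ij.2 * involutionSum a b (ij.2 - 1))) =
        (n + 1) * involutionSum (c + a) b n := by
      rw [Nat.sum_antidiagonal_succ', ih₀, mul_sum]
      simp only [Nat.cast_zero, zero_mul, mul_zero, zero_add, Nat.add_sub_cancel]
      refine sum_congr rfl fun ij hij => ?_
      have hn := mem_antidiagonal.1 hij
      have hchoose := congrArg (Nat.cast (R := R)) (Nat.add_one_mul_choose_eq n ij.2)
      rw [Nat.choose_symm_of_eq_add hn.symm,
        Nat.choose_symm_of_eq_add (show n + 1 = ij.1 + (ij.2 + 1) by rw [← hn, add_assoc])]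
      push_cast at hchoose ⊢
      calc _ = (n + 1).choose (ij.2 + 1) * (ij.2 + 1) * (c ^ ij.1 * involutionSum a b ij.2) := by
            ring
        _ = _ := by rw [← hchoose, mul_assoc]
    conv_rhs => rw [sum_antidiagonal_choose_succ_mul fun i j => c ^ i * involutionSum a b j]
    rw [involutionSum, mul_right_comm, ← pairs, ih₁, mul_sum, sum_mul, ← sum_add_distrib,
      ← sum_add_distrib]
    refine sum_congr rfl fun ij hij => ?_
    rw [Nat.choose_symm_of_eq_add (mem_antidiagonal.1 hij).symm, involutionSum_succ]
    ring

lemma involutionSum_zero_two_mul {𝕜 : Type*} [Field 𝕜] [CharZero 𝕜] (b : 𝕜) (n : ℕ) :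
    involutionSum 0 b (2 * n) / (2 * n).factorial = (b / 2) ^ n / n.factorial := by
  induction n with
  | zero => simp [involutionSum]
  | succ n ih =>
    calc involutionSum 0 b (2 * n + 2) / (2 * n + 2).factorial
        = involutionSum 0 b (2 * n) / (2 * n).factorial * (b / 2 / (n + 1)) := by
          have h₁ : (n + 1 : 𝕜) ≠ 0 := n.cast_add_one_ne_zero
          have h₂ : (2 * n + 1 : 𝕜) ≠ 0 := by exact_mod_cast (2 * n).succ_ne_zero
          have hfactorial : ((2 * n + 2).factorial : 𝕜) =
              2 * (n + 1) * (2 * n + 1) * (2 * n).factorial := by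
            simp only [Nat.factorial_succ]; push_cast; ring
          rw [involutionSum, hfactorial]
          push_cast
          field_simp
          ring
      _ = (b / 2) ^ (n + 1) / (n + 1).factorial := by
          rw [ih, pow_succ, div_mul_div_comm, Nat.factorial_succ, Nat.cast_mul, Nat.cast_succ,
            mul_comm (n + 1 : 𝕜)]

lemma involutionSum_zero_odd (b : R) (n : ℕ) : involutionSum 0 b (2 * n + 1) = 0 := by
  induction n with
  | zero => simp [involutionSum]
  | succ n ih => rw [show 2 * (n + 1) + 1 = 2 * n + 1 + 2 by ring, involutionSum, ih]; simp

lemma hasSum_involutionSum_zero_div_factorial (b : ℝ) :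
    HasSum (fun n => involutionSum 0 b n / n.factorial) (exp (b / 2)) := by
  have hodd : ∀ n ∉ Set.range (2 * · : ℕ → ℕ), involutionSum 0 b n / n.factorial = 0 := by
    intro n hn
    obtain ⟨k, rfl⟩ : Odd n :=
      Nat.not_even_iff_odd.1 fun ⟨k, hk⟩ => hn ⟨k, (two_mul k).trans hk.symm⟩
    rw [involutionSum_zero_odd, zero_div]
  rw [← (mul_right_injective₀ two_ne_zero).hasSum_iff hodd, exp_eq_exp_ℝ]
  exact (NormedSpace.expSeries_div_hasSum_exp (b / 2)).congr_fun
    fun n => involutionSum_zero_two_mul b n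

lemma hasSum_involutionSum_div_factorial (a b : ℝ) :
    HasSum (fun n => involutionSum a b n / n.factorial) (exp (a + b / 2)) := by
  have ha : HasSum (fun n => a ^ n / n.factorial) (exp a) := by
    rw [exp_eq_exp_ℝ]; exact NormedSpace.expSeries_div_hasSum_exp a
  have hb := hasSum_involutionSum_zero_div_factorial b
  have hcauchy (n : ℕ) : ∑ ij ∈ antidiagonal n,
      a ^ ij.1 / ij.1.factorial * (involutionSum 0 b ij.2 / ij.2.factorial) =
      involutionSum a b n / n.factorial := by
    rw [← add_zero a, involutionSum_add, add_zero, sum_div]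
    refine sum_congr rfl fun ij hij => ?_
    rw [← mem_antidiagonal.1 hij, Nat.cast_add_choose]
    field_simp
  have hsum := summable_norm_sum_mul_antidiagonal_of_summable_norm ha.summable.norm hb.summable.norm
  have htsum := tsum_mul_tsum_eq_tsum_sum_antidiagonal_of_summable_norm
    ha.summable.norm hb.summable.norm
  simp only [hcauchy] at hsum htsum
  rw [exp_add, ← ha.tsum_eq, ← hb.tsum_eq, htsum]
  exact hsum.of_norm.hasSum

end InvolutionSum

section MomentFunctional

open Polynomial

/-- The linear functional on polynomials sending `X ^ k` to `p k`, used to evaluate a polynomial in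
an edge probability when `k` edges occur jointly with probability `p k` instead of `p 1 ^ k`. -/
noncomputable def momentFunctional {R : Type*} [CommSemiring R] (p : ℕ → R) : R[X] →ₗ[R] R :=
  lsum fun k => LinearMap.toSpanSingleton R R (p k)

lemma momentFunctional_monomial {R : Type*} [CommSemiring R] (p : ℕ → R) (k : ℕ) (c : R) :
    momentFunctional p (monomial k c) = c * p k := by
  simp [momentFunctional, lsum_apply]

lemma momentFunctional_X_pow {R : Type*} [CommSemiring R] (p : ℕ → R) (k : ℕ) :
    momentFunctional p (X ^ k) = p k := by
  rw [X_pow_eq_monomial, momentFunctional_monomial, one_mul]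

lemma abs_momentFunctional_X_pow_mul_involutionSum_le {p : ℕ → ℝ} (hp : Antitone p)
    (hp₀ : ∀ k, 0 ≤ p k) (a b c : ℝ) (m k : ℕ) :
    |momentFunctional p (X ^ k * involutionSum (C a) (C b + C c * X) m)| ≤
      involutionSum |a| (|b| + |c|) m * p k := by
  induction m using Nat.twoStepInduction generalizing k with
  | zero => simp [involutionSum, momentFunctional_X_pow, abs_of_nonneg (hp₀ k)]
  | one =>
    rw [involutionSum, involutionSum, mul_comm, C_mul', map_smul, momentFunctional_X_pow,
      smul_eq_mul, abs_mul, abs_of_nonneg (hp₀ k)]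
  | more m ih₀ ih₁ =>
    set h := involutionSum (C a) (C b + C c * X)
    set H := involutionSum |a| (|b| + |c|)
    have hH : 0 ≤ H m := involutionSum_nonneg (abs_nonneg a) (by positivity) m
    have expand : X ^ k * h (m + 2) = a • (X ^ k * h (m + 1)) +
        ((m + 1) * b) • (X ^ k * h m) + ((m + 1) * c) • (X ^ (k + 1) * h m) := by
      simp only [h, involutionSum, smul_eq_C_mul, map_mul, map_add, map_natCast, map_one]
      ring
    rw [expand, map_add, map_add, map_smul, map_smul, map_smul]
    calc _ ≤ |a| * (H (m + 1) * p k) + (m + 1) * |b| * (H m * p k) +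
          (m + 1) * |c| * (H m * p k) := by
          refine (abs_add_three _ _ _).trans ?_
          simp only [smul_eq_mul, abs_mul, abs_of_nonneg (m.cast_add_one_pos (α := ℝ)).le]
          gcongr
          · exact ih₁ k
          · exact ih₀ k
          · exact (ih₀ (k + 1)).trans (mul_le_mul_of_nonneg_left (hp k.le_succ) hH)
      _ = H (m + 2) * p k := by simp only [H, involutionSum]; ring

end MomentFunctional

section PairingProb

open Finset

/-- The probability `1 / ((M - 1) (M - 3) ⋯ (M - 2k + 1))` that a uniform perfect matching of `M`
points contains `k` given disjoint pairs. The truncated subtraction makes it `0` when the product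
reaches a zero factor. -/
noncomputable def pairingProb (M k : ℕ) : ℝ :=
  ∏ i ∈ range k, ((M - (2 * i + 1) : ℕ) : ℝ)⁻¹

lemma pairingProb_nonneg (M k : ℕ) : 0 ≤ pairingProb M k :=
  prod_nonneg fun _ _ => by positivity

lemma antitone_pairingProb (M : ℕ) : Antitone (pairingProb M) :=
  antitone_nat_of_succ_le fun k => by
    rw [pairingProb, prod_range_succ]
    exact mul_le_of_le_one_right (pairingProb_nonneg M k) (Nat.cast_inv_le_one _)

lemma tendsto_pow_mul_pairingProb (k : ℕ) :
    Tendsto (fun M : ℕ => (M : ℝ) ^ k * pairingProb M k) atTop (𝓝 1) := by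
  have hfactor (c : ℕ) : Tendsto (fun M : ℕ => (M : ℝ) * ((M - c : ℕ) : ℝ)⁻¹) atTop (𝓝 1) := by
    rw [← tendsto_add_atTop_iff_nat c]
    have h := (tendsto_const_div_atTop_nhds_zero_nat (c : ℝ)).const_add 1
    rw [add_zero] at h
    refine h.congr' ?_
    filter_upwards [eventually_gt_atTop 0] with M hM
    rw [Nat.add_sub_cancel]
    push_cast
    field_simp
  simpa [pairingProb, prod_mul_distrib] using
    tendsto_finsetProd (range k) fun i _ => hfactor (2 * i + 1)

lemma descFactorial_mul_pairingProb_le_one {N M : ℕ} (h : 2 * N ≤ M) (m : ℕ) :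
    (N.descFactorial m : ℝ) * pairingProb M m ≤ 1 := by
  rw [Nat.descFactorial_eq_prod_range, pairingProb, Nat.cast_prod, ← prod_mul_distrib]
  refine prod_le_one (fun i _ => by positivity) fun i _ => ?_
  rw [← div_eq_mul_inv]
  refine div_le_one_of_le₀ (Nat.cast_le.2 ?_) (Nat.cast_nonneg _)
  lia

end PairingProb

section Asymptotics

open Polynomial

lemma tendsto_pow_mul_momentFunctional_pairingProb (d m : ℕ) (hd : d ≠ 0) (Q : ℝ[X]) :
    Tendsto (fun N : ℕ => (N : ℝ) ^ m * momentFunctional (pairingProb (d * N)) (X ^ m * Q)) atTop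
      (𝓝 ((d : ℝ)⁻¹ ^ m * Q.coeff 0)) := by
  induction Q using Polynomial.induction_on' with
  | add Q₁ Q₂ h₁ h₂ => simpa only [mul_add, map_add, coeff_add] using h₁.add h₂
  | monomial j c =>
    have hprob := (tendsto_pow_mul_pairingProb (m + j)).comp
      (tendsto_id.const_mul_atTop' (Nat.pos_of_ne_zero hd))
    have hinv : Tendsto (fun N : ℕ => (N : ℝ)⁻¹ ^ j) atTop (𝓝 (0 ^ j)) :=
      tendsto_inv_atTop_nhds_zero_nat.pow j
    convert ((hprob.mul hinv).const_mul ((d : ℝ)⁻¹ ^ (m + j) * c)).congr' ?_ using 2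
    · rcases eq_or_ne j 0 with rfl | hj
      · simp
      · simp [hj, coeff_monomial]
    · filter_upwards [eventually_ne_atTop 0] with N hN
      rw [X_pow_mul_monomial, momentFunctional_monomial, add_comm j m]
      simp only [Function.comp_apply, id_eq, Nat.cast_mul, mul_pow, inv_pow, pow_add]
      field_simp

lemma tendsto_choose_mul_momentFunctional (d m : ℕ) (hd : d ≠ 0) (Q : ℝ[X]) :
    Tendsto (fun N : ℕ => (N.choose m : ℝ) *
      momentFunctional (pairingProb (d * N)) (X ^ m * Q)) atTop
      (𝓝 ((d : ℝ)⁻¹ ^ m * Q.coeff 0 / m.factorial)) := by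
  refine ((isEquivalent_choose m).mul Asymptotics.IsEquivalent.refl).symm.tendsto_nhds ?_
  refine ((tendsto_pow_mul_momentFunctional_pairingProb d m hd Q).div_const _).congr fun N => ?_
  exact (div_mul_eq_mul_div _ _ _).symm

lemma abs_choose_mul_momentFunctional_le (a b c : ℝ) {N M : ℕ} (h : 2 * N ≤ M) (m : ℕ) :
    |(N.choose m : ℝ) * momentFunctional (pairingProb M)
      (X ^ m * involutionSum (C a) (C b + C c * X) m)| ≤
      involutionSum |a| (|b| + |c|) m / m.factorial := by
  set H := involutionSum |a| (|b| + |c|) m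
  have hH : 0 ≤ H := involutionSum_nonneg (abs_nonneg a) (by positivity) m
  calc _ ≤ (N.choose m : ℝ) * (H * pairingProb M m) := by
        rw [abs_mul, Nat.abs_cast]
        gcongr
        exact abs_momentFunctional_X_pow_mul_involutionSum_le (antitone_pairingProb M)
          (pairingProb_nonneg M) a b c m m
    _ = H / m.factorial * (N.descFactorial m * pairingProb M m) := by
        rw [Nat.descFactorial_eq_factorial_mul_choose, Nat.cast_mul]
        field_simp
    _ ≤ H / m.factorial :=
        mul_le_of_le_one_right (by positivity) (descFactorial_mul_pairingProb_le_one h m)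

lemma momentFunctional_involutionSum_eq_tsum (p : ℕ → ℝ) (a b c : ℝ) (N : ℕ) :
    momentFunctional p (involutionSum (1 + C a * X) (C b * X ^ 2 + C c * X ^ 3) N) =
      ∑' m, (N.choose m : ℝ) *
        momentFunctional p (X ^ m * involutionSum (C a) (C b + C c * X) m) := by
  have hscale (m : ℕ) : involutionSum (C a * X) (C b * X ^ 2 + C c * X ^ 3) m =
      X ^ m * involutionSum (C a) (C b + C c * X) m := by
    rw [← involutionSum_mul_sq]
    congr 1 <;> ring
  rw [tsum_eq_sum (s := Finset.range (N + 1)) fun m hm => by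
      simp [Nat.choose_eq_zero_of_lt (by simpa using hm)], involutionSum_add,
    ← Finset.Nat.sum_antidiagonal_swap, Finset.Nat.sum_antidiagonal_eq_sum_range_succ_mk, map_sum]
  refine Finset.sum_congr rfl fun m hm => ?_
  simp only [Prod.swap_prod_mk, Nat.choose_symm (Finset.mem_range_succ_iff.1 hm), one_pow, one_mul,
    hscale, ← nsmul_eq_mul, map_nsmul]

lemma tendsto_momentFunctional_involutionSum (d : ℕ) (hd : 2 ≤ d) (a b c : ℝ) :
    Tendsto (fun N : ℕ => momentFunctional (pairingProb (d * N))
      (involutionSum (1 + C a * X) (C b * X ^ 2 + C c * X ^ 3) N)) atTop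
      (𝓝 (exp (a / d + b / (2 * d ^ 2)))) := by
  have hlim : HasSum (fun m => (d : ℝ)⁻¹ ^ m * involutionSum a b m / m.factorial)
      (exp (a / d + b / (2 * d ^ 2))) := by
    convert hasSum_involutionSum_div_factorial ((d : ℝ)⁻¹ * a) ((d : ℝ)⁻¹ ^ 2 * b) using 1
    · simp only [involutionSum_mul_sq]
    · congr 1; field_simp
  simp_rw [momentFunctional_involutionSum_eq_tsum]
  rw [← hlim.tsum_eq]
  refine tendsto_tsum_of_dominated_convergence
    (hasSum_involutionSum_div_factorial |a| (|b| + |c|)).summable (fun m => ?_)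
    (Eventually.of_forall fun N m => abs_choose_mul_momentFunctional_le a b c ?_ m)
  · convert tendsto_choose_mul_momentFunctional d m (by lia)
      (involutionSum (C a) (C b + C c * X) m) using 5
    rw [coeff_zero_eq_eval_zero, ← coe_evalRingHom, map_involutionSum]
    simp
  · gcongr

end Asymptotics

section PartialMatchings

open Finset

variable {α : Type*} [DecidableEq α]

/-- The points covered by a set of pairs. -/
def endpoints (e : Finset (α × α)) : Finset α := e.image Prod.fst ∪ e.image Prod.snd

/-- A partial matching: the entries of all the pairs are distinct, encoded by counting them. -/
def IsPartialMatching (e : Finset (α × α)) : Prop := #(endpoints e) = 2 * #e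

lemma endpoints_insert (a b : α) (e : Finset (α × α)) :
    endpoints (insert (a, b) e) = insert a (insert b (endpoints e)) := by
  ext x
  simp only [endpoints, image_insert, union_insert, insert_union, mem_insert, mem_union]
  tauto

lemma endpoints_union (e f : Finset (α × α)) : endpoints (e ∪ f) = endpoints e ∪ endpoints f := by
  simp only [endpoints, image_union, union_union_union_comm]

lemma isPartialMatching_empty : IsPartialMatching (∅ : Finset (α × α)) := by
  simp [IsPartialMatching, endpoints]

lemma card_endpoints_le (e : Finset (α × α)) : #(endpoints e) ≤ 2 * #e := by
  have := card_union_le (e.image Prod.fst) (e.image Prod.snd)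
  have := card_image_le (s := e) (f := Prod.fst)
  have := card_image_le (s := e) (f := Prod.snd)
  rw [endpoints]
  lia

lemma isPartialMatching_insert {a b : α} {e : Finset (α × α)} (h : (a, b) ∉ e) :
    IsPartialMatching (insert (a, b) e) ↔
      IsPartialMatching e ∧ a ≠ b ∧ a ∉ endpoints e ∧ b ∉ endpoints e := by
  have := card_endpoints_le e
  rw [IsPartialMatching, IsPartialMatching, endpoints_insert, card_insert_of_notMem h,
    card_insert_eq_ite, card_insert_eq_ite]
  grind

lemma disjoint_of_disjoint_endpoints {e f : Finset (α × α)}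
    (h : Disjoint (endpoints e) (endpoints f)) : Disjoint e f := by
  simp only [endpoints, disjoint_union_left, disjoint_union_right] at h
  exact h.1.1.of_image_finset

lemma IsPartialMatching.union {e f : Finset (α × α)} (he : IsPartialMatching e)
    (hf : IsPartialMatching f) (h : Disjoint (endpoints e) (endpoints f)) :
    IsPartialMatching (e ∪ f) := by
  rw [IsPartialMatching, endpoints_union, card_union_of_disjoint h,
    card_union_of_disjoint (disjoint_of_disjoint_endpoints h), he, hf, mul_add]

lemma isPartialMatching_singleton {a b : α} (h : a ≠ b) :
    IsPartialMatching ({(a, b)} : Finset (α × α)) := by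
  simp [IsPartialMatching, endpoints, h]

/-- The set of pairs `(a, g a)` for an injection `g` of `A` into `B`: one way in which a matching
can send `A` into `B`. -/
def graphPairs {A B : Finset α} (g : A ↪ B) : Finset (α × α) :=
  A.attach.image fun a : A => (↑a, ↑(g a))

variable {A B : Finset α}

lemma forall_mem_graphPairs (g : A ↪ B) (P : α × α → Prop) :
    (∀ p ∈ graphPairs g, P p) ↔ ∀ a : A, P (a, g a) := by
  simp only [graphPairs, forall_mem_image, mem_attach, forall_true_left]

lemma image_fst_graphPairs (g : A ↪ B) : (graphPairs g).image Prod.fst = A := by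
  simp only [graphPairs, image_image, Function.comp_def, attach_image_val]

lemma card_graphPairs (g : A ↪ B) : #(graphPairs g) = #A := by
  rw [graphPairs, card_image_of_injective _ fun a b h => Subtype.ext (congrArg Prod.fst h),
    card_attach]

lemma card_image_snd_graphPairs (g : A ↪ B) : #((graphPairs g).image Prod.snd) = #A := by
  have hinj : Function.Injective fun a : A => (g a : α) := Subtype.val_injective.comp g.injective
  simp only [graphPairs, image_image, Function.comp_def, card_image_of_injective _ hinj,
    card_attach]

lemma image_snd_graphPairs_subset (g : A ↪ B) : (graphPairs g).image Prod.snd ⊆ B := by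
  rw [image_subset_iff, forall_mem_graphPairs]
  exact fun a => (g a).2

lemma endpoints_graphPairs_subset (g : A ↪ B) : endpoints (graphPairs g) ⊆ A ∪ B :=
  union_subset_union (image_fst_graphPairs g).subset (image_snd_graphPairs_subset g)

lemma isPartialMatching_graphPairs (h : Disjoint A B) (g : A ↪ B) :
    IsPartialMatching (graphPairs g) := by
  rw [IsPartialMatching, endpoints, image_fst_graphPairs,
    card_union_of_disjoint (h.mono_right (image_snd_graphPairs_subset g)),
    card_image_snd_graphPairs, card_graphPairs, two_mul]

end PartialMatchings

section PerfectMatchings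

open Finset Equiv

variable (α : Type*) [Fintype α] [DecidableEq α]

/-- The perfect matchings of a finite type, encoded as fixed-point-free involutions. -/
def perfectMatchings : Finset (Perm α) := {ω | ∀ a, ω (ω a) = a ∧ ω a ≠ a}

variable {α}

lemma mem_perfectMatchings {ω : Perm α} :
    ω ∈ perfectMatchings α ↔ ∀ a, ω (ω a) = a ∧ ω a ≠ a :=
  mem_filter_univ ω

/-- The perfect matchings containing a given set of pairs. -/
def matchingsExtending (e : Finset (α × α)) : Finset (Perm α) :=
  {ω ∈ perfectMatchings α | ∀ p ∈ e, ω p.1 = p.2}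

lemma apply_apply_of_mem_perfectMatchings {ω : Perm α} (hω : ω ∈ perfectMatchings α) (a : α) :
    ω (ω a) = a :=
  (mem_perfectMatchings.1 hω a).1

lemma apply_ne_of_mem_perfectMatchings {ω : Perm α} (hω : ω ∈ perfectMatchings α) (a : α) :
    ω a ≠ a :=
  (mem_perfectMatchings.1 hω a).2

lemma perfectMatchings_nonempty (h : Even (Fintype.card α)) : (perfectMatchings α).Nonempty := by
  obtain ⟨r, hr⟩ := h
  let φ : α ≃ Fin r ⊕ Fin r := Fintype.equivOfCardEq (by simp [hr])
  refine ⟨(φ.trans (Equiv.sumComm _ _)).trans φ.symm, mem_perfectMatchings.2 fun a => ?_⟩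
  refine ⟨by simp, fun h => ?_⟩
  have hfix : (φ a).swap = φ a := by simpa [symm_apply_eq] using h
  cases hφ : φ a <;> simp [hφ] at hfix

lemma mem_matchingsExtending {e : Finset (α × α)} {ω : Perm α} :
    ω ∈ matchingsExtending e ↔ ω ∈ perfectMatchings α ∧ ∀ p ∈ e, ω p.1 = p.2 :=
  mem_filter

lemma matchingsExtending_empty : matchingsExtending (∅ : Finset (α × α)) = perfectMatchings α := by
  simp [matchingsExtending]

lemma apply_mem_endpoints {e : Finset (α × α)} {ω : Perm α} (hω : ω ∈ matchingsExtending e) {a : α}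
    (ha : a ∈ endpoints e) : ω a ∈ endpoints e := by
  obtain ⟨hmatch, hext⟩ := mem_matchingsExtending.1 hω
  obtain ⟨p, hp, rfl⟩ | ⟨p, hp, rfl⟩ : (∃ p ∈ e, p.1 = a) ∨ ∃ p ∈ e, p.2 = a := by
    simpa only [endpoints, mem_union, mem_image] using ha
  · rw [hext p hp]
    exact mem_union_right _ (mem_image_of_mem _ hp)
  · rw [← hext p hp, apply_apply_of_mem_perfectMatchings hmatch]
    exact mem_union_left _ (mem_image_of_mem _ hp)

lemma permCongr_mem_perfectMatchings {τ ω : Perm α} :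
    τ.permCongr ω ∈ perfectMatchings α ↔ ω ∈ perfectMatchings α := by
  rw [mem_perfectMatchings, mem_perfectMatchings]
  refine (τ.forall_congr fun {a} => ?_).symm
  simp

lemma card_matchingsExtending_image (τ : Perm α) (e : Finset (α × α)) :
    #(matchingsExtending (e.image (Prod.map τ τ))) = #(matchingsExtending e) := by
  refine (card_equiv τ.permCongr fun ω => ?_).symm
  simp only [mem_matchingsExtending, permCongr_mem_perfectMatchings, forall_mem_image,
    permCongr_apply, Prod.map_fst, Prod.map_snd, symm_apply_apply, EmbeddingLike.apply_eq_iff_eq]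

lemma card_matchingsExtending_insert_congr {e : Finset (α × α)} {a b c : α} (hba : b ≠ a)
    (hca : c ≠ a) (hb : b ∉ endpoints e) (hc : c ∉ endpoints e) :
    #(matchingsExtending (insert (a, b) e)) = #(matchingsExtending (insert (a, c) e)) := by
  have hfix : e.image (Prod.map (swap b c) (swap b c)) = e := by
    refine (image_congr fun p hp => ?_).trans image_id
    have h₁ : p.1 ∈ endpoints e := mem_union_left _ (mem_image_of_mem _ hp)
    have h₂ : p.2 ∈ endpoints e := mem_union_right _ (mem_image_of_mem _ hp)
    exact Prod.ext (swap_apply_of_ne_of_ne (ne_of_mem_of_not_mem h₁ hb)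
      (ne_of_mem_of_not_mem h₁ hc)) (swap_apply_of_ne_of_ne (ne_of_mem_of_not_mem h₂ hb)
      (ne_of_mem_of_not_mem h₂ hc))
  rw [← card_matchingsExtending_image (swap b c), image_insert, hfix, Prod.map_apply,
    swap_apply_left, swap_apply_of_ne_of_ne hba.symm hca.symm]

lemma card_matchingsExtending_insert_mul {e : Finset (α × α)} (he : IsPartialMatching e) {a b : α}
    (hab : a ≠ b) (ha : a ∉ endpoints e) (hb : b ∉ endpoints e) :
    #(matchingsExtending (insert (a, b) e)) * (Fintype.card α - (2 * #e + 1)) =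
      #(matchingsExtending e) := by
  have hmaps : Set.MapsTo (fun ω : Perm α => ω a) (matchingsExtending e)
      ((insert a (endpoints e))ᶜ : Finset α) := by
    intro ω hω
    have hmatch := (mem_matchingsExtending.1 hω).1
    simp only [coe_compl, coe_insert, Set.mem_compl_iff, Set.mem_insert_iff, mem_coe, not_or]
    refine ⟨apply_ne_of_mem_perfectMatchings hmatch a, fun h => ha ?_⟩
    simpa only [apply_apply_of_mem_perfectMatchings hmatch] using apply_mem_endpoints hω h
  have hfibre (c : α) : {ω ∈ matchingsExtending e | ω a = c} =
      matchingsExtending (insert (a, c) e) := by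
    ext ω
    simp only [mem_filter, mem_matchingsExtending, forall_mem_insert]
    tauto
  rw [card_eq_sum_card_fiberwise hmaps, sum_congr rfl fun c hc => ?_, sum_const, card_compl,
    card_insert_of_notMem ha, he, smul_eq_mul, mul_comm]
  rw [mem_compl, mem_insert, not_or] at hc
  rw [hfibre, card_matchingsExtending_insert_congr hab.symm hc.1 hb hc.2]

lemma card_matchingsExtending {e : Finset (α × α)} (he : IsPartialMatching e) :
    (#(matchingsExtending e) : ℝ) =
      #(perfectMatchings α) * pairingProb (Fintype.card α) #e := by
  induction e using Finset.induction_on with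
  | empty => simp [matchingsExtending_empty, pairingProb]
  | insert p e hp ih =>
    obtain ⟨he', hne, ha, hb⟩ := (isPartialMatching_insert hp).1 he
    have hcard : 2 * (#e + 1) ≤ Fintype.card α := by
      rw [← card_insert_of_notMem hp, ← he]
      exact card_le_univ _
    have hpos : ((Fintype.card α - (2 * #e + 1) : ℕ) : ℝ) ≠ 0 := by
      rw [Nat.cast_ne_zero]; lia
    rw [card_insert_of_notMem hp, pairingProb, prod_range_succ, ← pairingProb, ← mul_assoc,
      ← ih he', ← card_matchingsExtending_insert_mul he' hne ha hb, Nat.cast_mul,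
      mul_inv_cancel_right₀ hpos]

lemma matchingsExtending_union (e f : Finset (α × α)) :
    matchingsExtending (e ∪ f) = {ω ∈ matchingsExtending e | ∀ p ∈ f, ω p.1 = p.2} := by
  simp only [matchingsExtending, filter_filter, forall_mem_union]

lemma sum_matchingsExtending_filter_forall_mem {M : Type*} [AddCommMonoid M]
    (e : Finset (α × α)) (A B : Finset α) (F : Perm α → M) :
    ∑ ω ∈ matchingsExtending e with ∀ a ∈ A, ω a ∈ B, F ω =
      ∑ g : A ↪ B, ∑ ω ∈ matchingsExtending (e ∪ graphPairs g), F ω := by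
  simp only [matchingsExtending_union, forall_mem_graphPairs]
  rw [← sum_biUnion]
  · congr 1
    ext ω
    simp only [mem_filter, mem_biUnion, mem_univ, true_and, exists_and_left, and_congr_right_iff]
    refine fun _ => ⟨fun h => ?_, fun ⟨g, hg⟩ a ha => hg ⟨a, ha⟩ ▸ (g _).2⟩
    exact ⟨⟨fun a => ⟨ω a, h a a.2⟩, fun a b hab =>
      Subtype.ext (ω.injective (congrArg Subtype.val hab))⟩, fun _ => rfl⟩
  · intro g _ g' _ hne
    refine disjoint_left.2 fun ω hg hg' => hne ?_
    ext a
    rw [← (mem_filter.1 hg).2, (mem_filter.1 hg').2]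

lemma sum_choose_card_filter_mul {R : Type*} [CommSemiring R] {e : Finset (α × α)}
    {A B : Finset α} (hAB : Disjoint A B) (j : ℕ) {F : Perm α → R} {c : R}
    (h : ∀ f, IsPartialMatching f → #f = j → endpoints f ⊆ A ∪ B →
      ∑ ω ∈ matchingsExtending (e ∪ f), F ω = c) :
    ∑ ω ∈ matchingsExtending e, ((#{a ∈ A | ω a ∈ B}).choose j : R) * F ω =
      (#A).choose j * (#B).descFactorial j * c := by
  have hchoose (ω : Perm α) : ((#{a ∈ A | ω a ∈ B}).choose j : R) * F ω =
      ∑ T ∈ A.powersetCard j, if ∀ a ∈ T, ω a ∈ B then F ω else 0 := by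
    rw [← card_powersetCard, ← sum_filter, sum_const, nsmul_eq_mul]
    congr 3
    ext T
    simp only [mem_powersetCard, subset_iff, mem_filter]
    grind
  have hreveal (T : Finset α) (hT : T ∈ A.powersetCard j) :
      ∑ ω ∈ matchingsExtending e with ∀ a ∈ T, ω a ∈ B, F ω = (#B).descFactorial j * c := by
    obtain ⟨hTA, rfl⟩ := mem_powersetCard.1 hT
    rw [sum_matchingsExtending_filter_forall_mem, sum_congr rfl fun g _ => h (graphPairs g)
      (isPartialMatching_graphPairs (hAB.mono_left hTA) g) (card_graphPairs g)
      ((endpoints_graphPairs_subset g).trans (union_subset_union_left hTA)), sum_const, card_univ,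
      Fintype.card_embedding_eq, Fintype.card_coe, Fintype.card_coe, nsmul_eq_mul]
  simp only [hchoose]
  rw [sum_comm]
  simp only [← sum_filter]
  rw [sum_congr rfl hreveal, sum_const, card_powersetCard, nsmul_eq_mul, mul_assoc]

lemma sum_card_filter_mem_self_mul {R : Type*} [CommSemiring R] {e : Finset (α × α)}
    {A : Finset α} {F : Perm α → R} {c : R}
    (h : ∀ f, IsPartialMatching f → #f = 1 → endpoints f ⊆ A →
      ∑ ω ∈ matchingsExtending (e ∪ f), F ω = c) :
    ∑ ω ∈ matchingsExtending e, (#{a ∈ A | ω a ∈ A} : R) * F ω = #A.offDiag * c := by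
  have hcard (ω : Perm α) (hω : ω ∈ matchingsExtending e) : (#{a ∈ A | ω a ∈ A} : R) * F ω =
      ∑ p ∈ A.offDiag, if ω p.1 = p.2 then F ω else 0 := by
    have himage : {p ∈ A.offDiag | ω p.1 = p.2} = {a ∈ A | ω a ∈ A}.image fun a => (a, ω a) := by
      have hne := apply_ne_of_mem_perfectMatchings (mem_matchingsExtending.1 hω).1
      ext ⟨a, b⟩
      simp only [mem_filter, mem_offDiag, mem_image, Prod.mk.injEq]
      grind
    rw [← sum_filter, sum_const, himage, card_image_of_injective _ fun a b h => congrArg Prod.fst h,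
      nsmul_eq_mul]
  rw [sum_congr rfl hcard, sum_comm]
  simp only [← sum_filter]
  rw [sum_congr rfl fun p hp => ?_, sum_const, nsmul_eq_mul]
  obtain ⟨h₁, h₂, hne⟩ := mem_offDiag.1 hp
  rw [← h {p} (isPartialMatching_singleton hne) (card_singleton p)
    (by simp [endpoints, insert_subset_iff, h₁, h₂]), matchingsExtending_union]
  simp

end PerfectMatchings

section EdgeMultiplicity

open Finset Equiv

variable {α V : Type*} [Fintype α] [DecidableEq V]

/-- The half-edges at a vertex `v`, when `vtx` attaches half-edges to vertices. -/
def halfEdges (vtx : α → V) (v : V) : Finset α := {a | vtx a = v}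

/-- The number of half-edges at `u` that are matched to half-edges at `v`: the multiplicity of the
edge `uv` if `u ≠ v`, and twice the number of loops at `u` if `u = v`. -/
def edgeMultiplicity (vtx : α → V) (ω : Perm α) (u v : V) : ℕ :=
  #{a ∈ halfEdges vtx u | vtx (ω a) = v}

variable {vtx : α → V} {u v w : V}

lemma mem_halfEdges {a : α} : a ∈ halfEdges vtx v ↔ vtx a = v :=
  mem_filter_univ a

lemma disjoint_halfEdges (h : u ≠ v) : Disjoint (halfEdges vtx u) (halfEdges vtx v) :=
  disjoint_left.2 fun _ hu hv => h ((mem_halfEdges.1 hu).symm.trans (mem_halfEdges.1 hv))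

lemma edgeMultiplicity_le (ω : Perm α) : edgeMultiplicity vtx ω u v ≤ #(halfEdges vtx u) :=
  card_filter_le _ _

lemma edgeMultiplicity_add_le (ω : Perm α) (h : v ≠ w) :
    edgeMultiplicity vtx ω u v + edgeMultiplicity vtx ω u w ≤ #(halfEdges vtx u) := by
  classical
  rw [edgeMultiplicity, edgeMultiplicity, ← card_union_of_disjoint, ← filter_or]
  · exact card_filter_le _ _
  · exact disjoint_filter.2 fun a _ hv hw => h (hv.symm.trans hw)

lemma edgeMultiplicity_lt_two_or (ω : Perm α) (hu : #(halfEdges vtx u) ≤ 3) (h : v ≠ w) :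
    edgeMultiplicity vtx ω u v < 2 ∨ edgeMultiplicity vtx ω u w < 2 := by
  have := edgeMultiplicity_add_le (vtx := vtx) (u := u) ω h
  lia

variable [DecidableEq α] {ω : Perm α}

lemma edgeMultiplicity_eq_card_filter_mem (ω : Perm α) (u v : V) :
    edgeMultiplicity vtx ω u v = #{a ∈ halfEdges vtx u | ω a ∈ halfEdges vtx v} := by
  simp only [edgeMultiplicity, mem_halfEdges]

lemma edgeMultiplicity_comm (hω : ω ∈ perfectMatchings α) (u v : V) :
    edgeMultiplicity vtx ω u v = edgeMultiplicity vtx ω v u := by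
  have hinv := apply_apply_of_mem_perfectMatchings hω
  refine card_equiv ω fun a => ?_
  simp only [mem_filter, mem_halfEdges, hinv, and_comm]

lemma even_edgeMultiplicity_self (hω : ω ∈ perfectMatchings α) (v : V) :
    Even (edgeMultiplicity vtx ω v v) := by
  rw [← ZMod.natCast_eq_zero_iff_even, edgeMultiplicity, card_eq_sum_ones, Nat.cast_sum]
  refine sum_involution (fun a _ => ω a) (fun a _ => by decide)
    (fun a _ _ => apply_ne_of_mem_perfectMatchings hω a) (fun a ha => ?_)
    fun a _ => apply_apply_of_mem_perfectMatchings hω a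
  rw [mem_filter, mem_halfEdges] at ha ⊢
  exact ⟨ha.2, (apply_apply_of_mem_perfectMatchings hω a).symm ▸ ha.1⟩

end EdgeMultiplicity

section ParallelExcess

open Finset

variable {R : Type*} [CommRing R]

/-- The value of `t ^ d.choose 2 - 1` at a multiplicity `d ≤ 3`, as a combination of binomial
coefficients of `d`. -/
def parallelExcess (t : R) (d : ℕ) : R :=
  (t - 1) * d.choose 2 + (t ^ 3 - 3 * t + 2) * d.choose 3

lemma pow_choose_two_eq (t : R) {d : ℕ} (hd : d ≤ 3) :
    t ^ d.choose 2 = 1 + parallelExcess t d := by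
  interval_cases d <;> norm_num [parallelExcess, Nat.choose]
  ring

lemma parallelExcess_of_lt_two (t : R) {d : ℕ} (hd : d < 2) : parallelExcess t d = 0 := by
  simp [parallelExcess, Nat.choose_eq_zero_of_lt, hd, hd.trans]

lemma prod_one_add_of_mul_eq_zero {ι : Type*} (s : Finset ι) (x : ι → R)
    (h : ∀ i ∈ s, ∀ j ∈ s, i ≠ j → x i * x j = 0) : ∏ i ∈ s, (1 + x i) = 1 + ∑ i ∈ s, x i := by
  classical
  induction s using Finset.induction_on with
  | empty => simp
  | insert i s hi ih =>
    have hzero : x i * ∑ j ∈ s, x j = 0 := by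
      rw [mul_sum]
      exact sum_eq_zero fun j hj => h i (mem_insert_self i s) j (mem_insert_of_mem hj)
        (ne_of_mem_of_not_mem hj hi).symm
    rw [prod_insert hi, sum_insert hi,
      ih fun j hj k hk => h j (mem_insert_of_mem hj) k (mem_insert_of_mem hk)]
    linear_combination hzero

end ParallelExcess

section LoopParallelWeight

open Finset Equiv

variable {α V : Type*} [Fintype α] [LinearOrder V]

/-- The number of loops at the vertices of `W`. -/
def loopCount (vtx : α → V) (ω : Perm α) (W : Finset V) : ℕ :=
  ∑ v ∈ W, edgeMultiplicity vtx ω v v / 2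

/-- The number of pairs of parallel edges between vertices of `W`. -/
def parallelCount (vtx : α → V) (ω : Perm α) (W : Finset V) : ℕ :=
  ∑ u ∈ W, ∑ v ∈ W, if u < v then (edgeMultiplicity vtx ω u v).choose 2 else 0

variable {R : Type*} [CommSemiring R]

/-- The weight of a matching in the joint generating function of the loops and the pairs of parallel
edges within `W`. -/
def loopParallelWeight (s t : R) (vtx : α → V) (ω : Perm α) (W : Finset V) : R :=
  s ^ loopCount vtx ω W * t ^ parallelCount vtx ω W

variable {vtx : α → V} {ω : Perm α} {W : Finset V} {u v w : V}

lemma loopParallelWeight_insert (s t : R) (hv : ∀ u ∈ W, u < v) :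
    loopParallelWeight s t vtx ω (insert v W) =
      s ^ (edgeMultiplicity vtx ω v v / 2) * (∏ u ∈ W, t ^ (edgeMultiplicity vtx ω u v).choose 2) *
        loopParallelWeight s t vtx ω W := by
  have hvW : v ∉ W := fun h => (hv v h).false
  have hloop : loopCount vtx ω (insert v W) = edgeMultiplicity vtx ω v v / 2 + loopCount vtx ω W :=
    sum_insert hvW
  have hparallel : parallelCount vtx ω (insert v W) =
      ∑ u ∈ W, (edgeMultiplicity vtx ω u v).choose 2 + parallelCount vtx ω W := by
    simp only [parallelCount, sum_insert hvW, lt_irrefl, if_false, zero_add]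
    rw [sum_eq_zero fun u hu => if_neg (hv u hu).not_gt, zero_add, sum_add_distrib]
    exact congrArg (· + _) (sum_congr rfl fun u hu => if_pos (hv u hu))
  rw [loopParallelWeight, loopParallelWeight, hloop, hparallel, pow_add, pow_add,
    prod_pow_eq_pow_sum]
  ring

variable [DecidableEq α]

/-- A vertex with at least two edges leaving `W` has at most one half-edge matched into `W`. -/
lemma loopParallelWeight_erase (s t : R) (hω : ω ∈ perfectMatchings α)
    (hu : #(halfEdges vtx u) ≤ 3) (hv : v ∉ W) (huv : 2 ≤ edgeMultiplicity vtx ω u v) :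
    loopParallelWeight s t vtx ω (W.erase u) = loopParallelWeight s t vtx ω W := by
  have hle (w : V) (hw : w ∈ W) : edgeMultiplicity vtx ω u w < 2 :=
    (edgeMultiplicity_lt_two_or ω hu (ne_of_mem_of_not_mem hw hv)).resolve_right huv.not_gt
  have hchoose (w : V) (hw : w ∈ W) : (edgeMultiplicity vtx ω u w).choose 2 = 0 :=
    Nat.choose_eq_zero_of_lt (hle w hw)
  by_cases huW : u ∈ W
  · have hloop : loopCount vtx ω (W.erase u) = loopCount vtx ω W :=
      sum_erase _ (Nat.div_eq_of_lt (hle u huW))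
    have hparallel : parallelCount vtx ω (W.erase u) = parallelCount vtx ω W := by
      refine (sum_erase W (sum_eq_zero fun w hw => ?_)).trans
        (sum_congr rfl fun w hw => sum_erase W ?_)
      · rw [hchoose w (mem_of_mem_erase hw), ite_self]
      · rw [edgeMultiplicity_comm hω, hchoose w hw, ite_self]
    rw [loopParallelWeight, loopParallelWeight, hloop, hparallel]
  · rw [erase_eq_of_notMem huW]

variable {S : Type*} [CommRing S]

lemma parallelExcess_mul_parallelExcess (t : S) (hω : ω ∈ perfectMatchings α)
    (hv : #(halfEdges vtx v) ≤ 3) (huw : u ≠ w) :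
    parallelExcess t (edgeMultiplicity vtx ω u v) * parallelExcess t (edgeMultiplicity vtx ω w v) =
      0 := by
  rw [edgeMultiplicity_comm hω u, edgeMultiplicity_comm hω w]
  obtain h | h := edgeMultiplicity_lt_two_or ω hv huw
  · rw [parallelExcess_of_lt_two t h, zero_mul]
  · rw [parallelExcess_of_lt_two t h, mul_zero]

lemma loops_mul_parallelExcess (t : S) (hω : ω ∈ perfectMatchings α)
    (hv : #(halfEdges vtx v) ≤ 3) (huv : u ≠ v) :
    ((edgeMultiplicity vtx ω v v / 2 : ℕ) : S) * parallelExcess t (edgeMultiplicity vtx ω u v) =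
      0 := by
  rw [edgeMultiplicity_comm hω u]
  obtain h | h := edgeMultiplicity_lt_two_or ω hv huv
  · rw [parallelExcess_of_lt_two t h, mul_zero]
  · rw [Nat.div_eq_of_lt h, Nat.cast_zero, zero_mul]

lemma parallelExcess_mul_loopParallelWeight_erase (s t : S) (hω : ω ∈ perfectMatchings α)
    (hu : #(halfEdges vtx u) ≤ 3) (hv : v ∉ W) :
    parallelExcess t (edgeMultiplicity vtx ω u v) * loopParallelWeight s t vtx ω (W.erase u) =
      parallelExcess t (edgeMultiplicity vtx ω u v) * loopParallelWeight s t vtx ω W := by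
  obtain h | h := lt_or_ge (edgeMultiplicity vtx ω u v) 2
  · rw [parallelExcess_of_lt_two t h, zero_mul, zero_mul]
  · rw [loopParallelWeight_erase s t hω hu hv h]

lemma loopParallelWeight_insert_of_card_le_three (s t : S) (hω : ω ∈ perfectMatchings α)
    (hv : ∀ u ∈ W, u < v) (hcard : ∀ u ∈ insert v W, #(halfEdges vtx u) ≤ 3) :
    loopParallelWeight s t vtx ω (insert v W) =
      loopParallelWeight s t vtx ω W +
      (s - 1) * ((edgeMultiplicity vtx ω v v / 2 : ℕ) * loopParallelWeight s t vtx ω W) +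
      ∑ u ∈ W, parallelExcess t (edgeMultiplicity vtx ω u v) *
        loopParallelWeight s t vtx ω (W.erase u) := by
  have hvW : v ∉ W := fun h => (hv v h).false
  have hv3 := hcard v (mem_insert_self v W)
  have hu3 (u : V) (hu : u ∈ W) := hcard u (mem_insert_of_mem hu)
  set ℓ := edgeMultiplicity vtx ω v v / 2
  set x : V → S := fun u => parallelExcess t (edgeMultiplicity vtx ω u v)
  have hs : s ^ ℓ = 1 + (s - 1) * ℓ := by
    have hℓ : ℓ ≤ 1 := Nat.div_le_div_right (c := 2) ((edgeMultiplicity_le ω).trans hv3)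
    obtain h | h := Nat.le_one_iff_eq_zero_or_eq_one.1 hℓ <;> simp [h]
  have hprod : ∏ u ∈ W, t ^ (edgeMultiplicity vtx ω u v).choose 2 = 1 + ∑ u ∈ W, x u := by
    rw [← prod_one_add_of_mul_eq_zero W x fun u _ w _ => parallelExcess_mul_parallelExcess t hω hv3]
    exact prod_congr rfl fun u hu => pow_choose_two_eq t ((edgeMultiplicity_le ω).trans (hu3 u hu))
  have hℓx : (ℓ : S) * ∑ u ∈ W, x u = 0 := by
    rw [mul_sum]
    exact sum_eq_zero fun u hu => loops_mul_parallelExcess t hω hv3 (hv u hu).ne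
  rw [loopParallelWeight_insert s t hv, hs, hprod, sum_congr rfl fun u hu =>
    parallelExcess_mul_loopParallelWeight_erase s t hω (hu3 u hu) hvW, ← sum_mul]
  linear_combination (s - 1) * loopParallelWeight s t vtx ω W * hℓx

end LoopParallelWeight

section MatchingSums

open Finset Equiv Polynomial

variable {α V : Type*} [Fintype α] [DecidableEq α]

lemma sum_loops_mul [DecidableEq V] {vtx : α → V} {v : V} (hv : #(halfEdges vtx v) = 3)
    {e : Finset (α × α)} {F : Perm α → ℝ} {c : ℝ}
    (h : ∀ f, IsPartialMatching f → #f = 1 → endpoints f ⊆ halfEdges vtx v →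
      ∑ ω ∈ matchingsExtending (e ∪ f), F ω = c) :
    ∑ ω ∈ matchingsExtending e, (edgeMultiplicity vtx ω v v / 2 : ℕ) * F ω = 3 * c := by
  have hsum := sum_card_filter_mem_self_mul h
  have hhalf (ω : Perm α) (hω : ω ∈ matchingsExtending e) :
      ((edgeMultiplicity vtx ω v v / 2 : ℕ) : ℝ) * F ω =
        (edgeMultiplicity vtx ω v v : ℝ) * F ω / 2 := by
    rw [Nat.cast_div (even_edgeMultiplicity_self (mem_matchingsExtending.1 hω).1 v).two_dvd
      two_ne_zero, Nat.cast_two, div_mul_eq_mul_div]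
  rw [offDiag_card, hv, show 3 * 3 - 3 = 6 from rfl] at hsum
  rw [sum_congr rfl hhalf, ← sum_div]
  simp only [edgeMultiplicity_eq_card_filter_mem, hsum]
  push_cast
  ring

lemma sum_parallelExcess_mul [DecidableEq V] (t : ℝ) {vtx : α → V} {u v : V} (huv : u ≠ v)
    (hu : #(halfEdges vtx u) = 3) (hv : #(halfEdges vtx v) = 3)
    {e : Finset (α × α)} {F : Perm α → ℝ} {c : ℕ → ℝ}
    (h : ∀ f, IsPartialMatching f → endpoints f ⊆ halfEdges vtx u ∪ halfEdges vtx v →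
      ∑ ω ∈ matchingsExtending (e ∪ f), F ω = c #f) :
    ∑ ω ∈ matchingsExtending e, parallelExcess t (edgeMultiplicity vtx ω u v) * F ω =
      18 * (t - 1) * c 2 + 6 * (t ^ 3 - 3 * t + 2) * c 3 := by
  have hsum (j : ℕ) := sum_choose_card_filter_mul (disjoint_halfEdges huv) j
    fun f hf hj hsub => (h f hf hsub).trans (congrArg c hj)
  simp only [← edgeMultiplicity_eq_card_filter_mem, hu, hv] at hsum
  have hdouble : ∑ ω ∈ matchingsExtending e,
      ((edgeMultiplicity vtx ω u v).choose 2 : ℝ) * F ω = 18 * c 2 := by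
    rw [hsum]; norm_num [Nat.choose, Nat.descFactorial]
  have htriple : ∑ ω ∈ matchingsExtending e,
      ((edgeMultiplicity vtx ω u v).choose 3 : ℝ) * F ω = 6 * c 3 := by
    rw [hsum]; norm_num [Nat.descFactorial]
  simp only [parallelExcess, add_mul _ _ (F _), sum_add_distrib, mul_assoc, ← mul_sum, hdouble,
    htriple]
  ring

/-- The polynomial in the probability `X` of an edge that describes `n` cubic vertices, each of
which is free, or carries a loop (weight `3 (s - 1) X`), or shares a multiple edge with exactly one
other vertex. -/
noncomputable def loopParallelPolynomial (s t : ℝ) (n : ℕ) : ℝ[X] :=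
  involutionSum (1 + C (3 * (s - 1)) * X)
    (C (18 * (t - 1)) * X ^ 2 + C (6 * (t ^ 3 - 3 * t + 2)) * X ^ 3) n

lemma momentFunctional_X_pow_mul_loopParallelPolynomial_succ (p : ℕ → ℝ) (s t : ℝ) (k n : ℕ) :
    momentFunctional p (X ^ k * loopParallelPolynomial s t (n + 1)) =
      momentFunctional p (X ^ k * loopParallelPolynomial s t n) +
      (s - 1) * (3 * momentFunctional p (X ^ (k + 1) * loopParallelPolynomial s t n)) +
      n * (18 * (t - 1) *
          momentFunctional p (X ^ (k + 2) * loopParallelPolynomial s t (n - 1)) +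
        6 * (t ^ 3 - 3 * t + 2) *
          momentFunctional p (X ^ (k + 3) * loopParallelPolynomial s t (n - 1))) := by
  simp only [← smul_eq_mul, ← map_smul, ← map_add]
  congr 1
  simp only [loopParallelPolynomial, involutionSum_succ, smul_eq_C_mul, smul_eq_mul, map_mul,
    map_natCast]
  ring

variable [LinearOrder V]

lemma sum_matchingsExtending_loopParallelWeight_insert (s t : ℝ) {vtx : α → V} {v : V}
    {W : Finset V} (hv : ∀ u ∈ W, u < v) (hcard : ∀ u ∈ insert v W, #(halfEdges vtx u) = 3)
    {e : Finset (α × α)} (heW : ∀ u ∈ insert v W, Disjoint (endpoints e) (halfEdges vtx u))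
    {S : ℕ → ℕ → ℝ}
    (hS : ∀ f, IsPartialMatching f → Disjoint (endpoints e) (endpoints f) → ∀ W' ⊆ W,
      (∀ w ∈ W', Disjoint (endpoints f) (halfEdges vtx w)) →
        ∑ ω ∈ matchingsExtending (e ∪ f), loopParallelWeight s t vtx ω W' = S #f #W') :
    ∑ ω ∈ matchingsExtending e, loopParallelWeight s t vtx ω (insert v W) =
      S 0 #W + (s - 1) * (3 * S 1 #W) +
        #W * (18 * (t - 1) * S 2 (#W - 1) + 6 * (t ^ 3 - 3 * t + 2) * S 3 (#W - 1)) := by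
  have hvv := mem_insert_self v W
  have hfree : ∑ ω ∈ matchingsExtending e, loopParallelWeight s t vtx ω W = S 0 #W := by
    simpa [endpoints] using hS ∅ isPartialMatching_empty (by simp [endpoints]) W subset_rfl
  have hloops : ∑ ω ∈ matchingsExtending e,
      (edgeMultiplicity vtx ω v v / 2 : ℕ) * loopParallelWeight s t vtx ω W = 3 * S 1 #W := by
    refine sum_loops_mul (hcard v hvv) fun f hf hf₁ hfv => hf₁ ▸ ?_
    exact hS f hf ((heW v hvv).mono_right hfv) W subset_rfl
      fun w hw => (disjoint_halfEdges (hv w hw).ne').mono_left hfv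
  have hparallel (u : V) (hu : u ∈ W) : ∑ ω ∈ matchingsExtending e,
      parallelExcess t (edgeMultiplicity vtx ω u v) * loopParallelWeight s t vtx ω (W.erase u) =
        18 * (t - 1) * S 2 (#W - 1) + 6 * (t ^ 3 - 3 * t + 2) * S 3 (#W - 1) := by
    have hu' := mem_insert_of_mem (a := u) (b := v) hu
    rw [← card_erase_of_mem hu]
    refine sum_parallelExcess_mul t (c := fun j => S j #(W.erase u)) (hv u hu).ne (hcard u hu')
      (hcard v hvv) fun f hf hfuv => hS f hf ?_ (W.erase u) (erase_subset u W) fun w hw => ?_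
    · exact (disjoint_union_right.2 ⟨heW u hu', heW v hvv⟩).mono_right hfuv
    · obtain ⟨hwu, hwW⟩ := mem_erase.1 hw
      exact (disjoint_union_left.2 ⟨disjoint_halfEdges hwu.symm,
        disjoint_halfEdges (hv w hwW).ne'⟩).mono_left hfuv
  rw [sum_congr rfl fun ω hω => loopParallelWeight_insert_of_card_le_three s t
    (mem_matchingsExtending.1 hω).1 hv fun u hu => (hcard u hu).le]
  rw [sum_add_distrib, sum_add_distrib, ← mul_sum, sum_comm, hfree, hloops,
    sum_congr rfl hparallel, sum_const, nsmul_eq_mul]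

theorem sum_matchingsExtending_loopParallelWeight (s t : ℝ) {vtx : α → V} {W : Finset V}
    (hW : ∀ v ∈ W, #(halfEdges vtx v) = 3) {e : Finset (α × α)} (he : IsPartialMatching e)
    (heW : ∀ v ∈ W, Disjoint (endpoints e) (halfEdges vtx v)) :
    ∑ ω ∈ matchingsExtending e, loopParallelWeight s t vtx ω W =
      #(perfectMatchings α) * momentFunctional (pairingProb (Fintype.card α))
        (X ^ #e * loopParallelPolynomial s t #W) := by
  induction W using Finset.strongInduction generalizing e with
  | H W ih =>
  obtain rfl | hne := W.eq_empty_or_nonempty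
  · simp [loopParallelWeight, loopCount, parallelCount, loopParallelPolynomial, involutionSum,
      momentFunctional_X_pow, card_matchingsExtending he]
  obtain ⟨v, W, hv, rfl⟩ : ∃ v W', (∀ u ∈ W', u < v) ∧ W = insert v W' :=
    ⟨W.max' hne, W.erase (W.max' hne), fun u hu => lt_max'_of_mem_erase_max' W hne hu,
      (insert_erase (W.max'_mem hne)).symm⟩
  have hvW : v ∉ W := fun h => (hv v h).false
  rw [sum_matchingsExtending_loopParallelWeight_insert s t hv hW heW
    (S := fun k n => #(perfectMatchings α) * momentFunctional (pairingProb (Fintype.card α))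
      (X ^ (#e + k) * loopParallelPolynomial s t n)) fun f hf hef W' hW' hfW' => ?_,
    card_insert_of_notMem hvW, momentFunctional_X_pow_mul_loopParallelPolynomial_succ]
  · simp only [add_zero]
    ring
  · have hins {w : V} (hw : w ∈ W') : w ∈ insert v W := mem_insert_of_mem (hW' hw)
    rw [ih W' (hW'.trans_ssubset (ssubset_insert hvW)) (fun w hw => hW w (hins hw))
      (he.union hf hef) fun w hw => ?_, card_union_of_disjoint (disjoint_of_disjoint_endpoints hef)]
    exact endpoints_union e f ▸ disjoint_union_left.2 ⟨heW w (hins hw), hfW' w hw⟩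

theorem sum_perfectMatchings_loopParallelWeight_div_card [Fintype V] (s t : ℝ) {vtx : α → V}
    (hcard : ∀ v, #(halfEdges vtx v) = 3) (heven : Even (Fintype.card α)) :
    (∑ ω ∈ perfectMatchings α, loopParallelWeight s t vtx ω univ) / #(perfectMatchings α) =
      momentFunctional (pairingProb (Fintype.card α))
        (loopParallelPolynomial s t (Fintype.card V)) := by
  have hpos : (#(perfectMatchings α) : ℝ) ≠ 0 :=
    Nat.cast_ne_zero.2 (perfectMatchings_nonempty heven).card_pos.ne'
  rw [← matchingsExtending_empty, sum_matchingsExtending_loopParallelWeight s t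
    (fun v _ => hcard v) isPartialMatching_empty (by simp [endpoints]), matchingsExtending_empty,
    mul_div_cancel_left₀ _ hpos, card_empty, pow_zero, one_mul, card_univ]

end MatchingSums

section ConfigurationModel

open Finset Equiv

variable {N : ℕ}

lemma card_halfEdges_blk (v : Fin N) : #(halfEdges (blk : Fin (3 * N) → Fin N) v) = 3 := by
  have hlt (i : Fin 3) : 3 * v.val + i.val < 3 * N := by lia
  refine (card_bij (s := univ) (fun (i : Fin 3) _ => ⟨3 * v + i, hlt i⟩) (fun i _ => ?_)
    (fun i _ j _ hij => ?_) fun a ha => ?_).symm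
  · rw [mem_halfEdges, blk, Fin.mk.injEq]
    lia
  · rw [Fin.mk.injEq] at hij
    lia
  · rw [mem_halfEdges, blk, Fin.mk.injEq] at ha
    exact ⟨⟨a % 3, Nat.mod_lt _ three_pos⟩, mem_univ _, Fin.ext (by lia)⟩

lemma card_blk_apply_eq (ω : Perm (Fin (3 * N))) (u v : Fin N) :
    Nat.card {a : Fin (3 * N) // blk a = u ∧ blk (ω a) = v} = edgeMultiplicity blk ω u v := by
  rw [Nat.subtype_card _ fun a => ?_, edgeMultiplicity]
  rw [mem_filter, mem_halfEdges]

lemma mem_perfectMatchings_of_omega (ω : Omega N) : ω.val ∈ perfectMatchings (Fin (3 * N)) :=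
  mem_perfectMatchings.2 ω.2

lemma X1_eq_loopCount (ω : Omega N) : X1 ω = loopCount blk ω.val univ := by
  have hsum : Nat.card {a : Fin (3 * N) // blk (ω.val a) = blk a} =
      ∑ v, edgeMultiplicity blk ω.val v v := by
    rw [Nat.subtype_card {a | blk (ω.val a) = blk a} fun a => mem_filter_univ a,
      card_eq_sum_card_fiberwise (f := blk) (t := univ) (by simp)]
    refine sum_congr rfl fun v _ => congrArg card ?_
    ext a
    simp only [mem_filter, mem_halfEdges]
    grind
  rw [X1, hsum, loopCount, Nat.sum_div fun v _ =>
    (even_edgeMultiplicity_self (mem_perfectMatchings_of_omega ω) v).two_dvd]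

lemma X2_eq_parallelCount (ω : Omega N) : X2 ω = parallelCount blk ω.val univ := by
  refine sum_congr rfl fun u _ => sum_congr rfl fun v _ =>
    ite_congr rfl (fun huv => ?_) fun _ => rfl
  rw [mult, if_neg huv.ne, card_blk_apply_eq]

lemma sum_Omega {M : Type*} [AddCommMonoid M] (F : Perm (Fin (3 * N)) → M) :
    ∑ ω : Omega N, F ω.val = ∑ ω ∈ perfectMatchings (Fin (3 * N)), F ω :=
  (sum_subtype _ (fun _ => mem_perfectMatchings) F).symm

lemma card_Omega : Nat.card (Omega N) = #(perfectMatchings (Fin (3 * N))) :=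
  Nat.subtype_card _ fun _ => mem_perfectMatchings

lemma average_pow_X1_mul_pow_X2 (s t : ℝ) (hN : Even N) :
    (∑ ω : Omega N, s ^ X1 ω * t ^ X2 ω) / (Nat.card (Omega N) : ℝ) =
      momentFunctional (pairingProb (3 * N)) (loopParallelPolynomial s t N) := by
  have heven : Even (Fintype.card (Fin (3 * N))) := by
    rw [Fintype.card_fin]; exact hN.mul_left 3
  have h := sum_perfectMatchings_loopParallelWeight_div_card s t card_halfEdges_blk heven
  rw [Fintype.card_fin, Fintype.card_fin] at h
  rw [← h, card_Omega, ← sum_Omega]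
  simp only [X1_eq_loopCount, X2_eq_parallelCount, loopParallelWeight]

end ConfigurationModel

theorem expectation_two_pow_loops_add_parallel_general (s t : ℝ) :
    Tendsto
      (fun N : ℕ =>
        (∑ ω : Omega N, s ^ X1 ω * t ^ X2 ω) / (Nat.card (Omega N) : ℝ))
      (atTop ⊓ 𝓟 {N : ℕ | Even N}) (𝓝 (Real.exp ((s - 1) + (t - 1)))) := by
  have hlim := tendsto_momentFunctional_involutionSum 3 (by norm_num) (3 * (s - 1)) (18 * (t - 1))
    (6 * (t ^ 3 - 3 * t + 2))
  have hexponent :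
      3 * (s - 1) / (3 : ℕ) + 18 * (t - 1) / (2 * (3 : ℕ) ^ 2) = (s - 1) + (t - 1) := by
    push_cast; ring
  rw [hexponent] at hlim
  refine (hlim.mono_left inf_le_left).congr' ?_
  filter_upwards [mem_inf_of_right (mem_principal_self _)] with N hN
  exact (average_pow_X1_mul_pow_X2 s t hN).symm

/-- Theorem: `E[2^{X_{N,1} + X_{N,2}}] → e²` as `N → ∞` through even `N`. -/
theorem expectation_two_pow_loops_add_parallel :
    Tendsto
      (fun N : ℕ =>
        (∑ ω : Omega N, (2 : ℝ) ^ (X1 ω + X2 ω)) / (Nat.card (Omega N) : ℝ))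
      (atTop ⊓ 𝓟 {N : ℕ | Even N}) (𝓝 (Real.exp 2)) := by
  simpa only [pow_add, show (2 - 1 + (2 - 1) : ℝ) = 2 by norm_num] using
    expectation_two_pow_loops_add_parallel_general 2 2
end

section
/- Almost all labelled cubic multigraphs are asymmetric: the proportion of cubic multigraphs m on the vertex set Fin N that admit a nontrivial automorphism, i.e., a permutation σ ≠ id of Fin N with m(σu, σv) = m(u,v) for all u, v, tends to 0 as N → ∞ through even values of N. -/
open Filter Real Topology

/-- A cubic multigraph on `Fin N`: a symmetric multiplicity function, where `m u u`
counts loops at `u` (each contributing 2 to the degree) and `m u v` (for `u ≠ v`)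
counts edges between `u` and `v`, such that every vertex has degree 3. -/
def IsCubic {N : ℕ} (m : Fin N → Fin N → ℕ) : Prop :=
  (∀ u v, m u v = m v u) ∧ ∀ u, 2 * m u u + ∑ v ∈ Finset.univ.erase u, m u v = 3

/-!
A cubic multigraph is the image of pairings (perfect matchings) of the `3N` half-edges
`Fin N × Fin 3`, and the pairings over a given multigraph form a single orbit of the group
`Fin N → Perm (Fin 3)` of order `6 ^ N`. Averaging over this group, as in Burnside's lemma, the
number of pairs `(τ, ρ)` such that the pairing `ρ` is invariant under the lift `σ.prodShear τ` of
`σ` to the half-edges is `6 ^ N` times the number of multigraphs invariant under `σ`.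

An invariant pairing is determined by the pairing it induces on the fixed half-edges and by how it
matches the nontrivial cycles of the lift with one another, so a lift moving `t` half-edges in `r`
cycles leaves at most a fraction `(2 / N) ^ (t / 2) * (2 * √t) ^ r` of all pairings invariant. A
symmetric multigraph has an automorphism of prime order `p`, say with `k` cycles of length `p`;
there are at most `(3 * N) ^ (p * k) / (p * k) ^ k` permutations of this type, and together their
lifts contribute a fraction `O((C / N ^ (1 / 4)) ^ (p * k))`. Since `p * k ≥ 2`, summing over `p`
and `k` leaves `O(N ^ (-1 / 2))`.
-/

open Equiv (Perm)
open scoped Nat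

section TransitiveAction

variable {H X : Type*} [Group H] [MulAction H X]

theorem card_smul_eq_of_mem_orbit {x y : X} (hy : y ∈ MulAction.orbit H x) :
    Nat.card {h : H // h • x = y} = Nat.card (MulAction.stabilizer H x) := by
  obtain ⟨g, rfl⟩ := hy
  refine Nat.card_congr ((Equiv.mulLeft g⁻¹).subtypeEquiv fun h => ?_)
  rw [Equiv.coe_mulLeft, MulAction.mem_stabilizer_iff, mul_smul, inv_smul_eq_iff]

theorem ncard_orbit_mul_card_smul_eq {x₀ x y : X} (hx : x ∈ MulAction.orbit H x₀)
    (hy : y ∈ MulAction.orbit H x₀) :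
    (MulAction.orbit H x₀).ncard * Nat.card {h : H // h • x = y} = Nat.card H := by
  rw [← MulAction.orbit_eq_iff.mpr hx] at hy ⊢
  rw [card_smul_eq_of_mem_orbit hy, ← MulAction.index_stabilizer, Subgroup.index_mul_card]

theorem card_smul_eq_on_orbit [Finite H] (x₀ : X) (s : X → X)
    (hs : ∀ x ∈ MulAction.orbit H x₀, s x ∈ MulAction.orbit H x₀) :
    Nat.card {q : H × X // q.2 ∈ MulAction.orbit H x₀ ∧ q.1 • q.2 = s q.2} = Nat.card H := by
  have hfin : (MulAction.orbit H x₀).Finite := Set.finite_range _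
  have : Fintype (MulAction.orbit H x₀) := hfin.fintype
  let e : {q : H × X // q.2 ∈ MulAction.orbit H x₀ ∧ q.1 • q.2 = s q.2} ≃
      Σ x : MulAction.orbit H x₀, {h : H // h • (x : X) = s x} :=
    { toFun := fun q => ⟨⟨q.1.2, q.2.1⟩, q.1.1, q.2.2⟩
      invFun := fun p => ⟨(p.2.1, p.1.1), p.1.2, p.2.2⟩ }
  have hfibre (x : MulAction.orbit H x₀) : Nat.card {h : H // h • (x : X) = s x} =
      Nat.card {h : H // h • x₀ = x₀} :=
    Nat.eq_of_mul_eq_mul_left ((Set.ncard_pos hfin).mpr (MulAction.nonempty_orbit x₀))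
      ((ncard_orbit_mul_card_smul_eq x.2 (hs x x.2)).trans
        (ncard_orbit_mul_card_smul_eq (MulAction.mem_orbit_self x₀)
          (MulAction.mem_orbit_self x₀)).symm)
  rw [Nat.card_congr e, Nat.card_sigma, Fintype.sum_congr _ _ hfibre, Finset.sum_const,
    Finset.card_univ, ← Nat.card_eq_fintype_card, Nat.card_coe_set_eq, smul_eq_mul,
    ncard_orbit_mul_card_smul_eq (MulAction.mem_orbit_self x₀) (MulAction.mem_orbit_self x₀)]

end TransitiveAction

/-! ### Pairings -/

/-- A pairing (perfect matching) of `X`, encoded as the fixed-point-free involution exchanging the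
two points of each pair. -/
def IsPairing {X : Type*} (ρ : Perm X) : Prop := Function.Involutive ρ ∧ ∀ x, ρ x ≠ x

/-- The number of pairings of a finite type; `0` if its cardinality is odd. -/
noncomputable def pairingCount (X : Type*) : ℕ := Nat.card {ρ : Perm X // IsPairing ρ}

section Pairing

variable {X Y : Type*}

theorem IsPairing.permCongr {ρ : Perm X} (hρ : IsPairing ρ) (e : X ≃ Y) :
    IsPairing (e.permCongr ρ) := by
  refine ⟨fun y => ?_, fun y hy => hρ.2 (e.symm y) ?_⟩
  · simp only [Equiv.permCongr_apply, Equiv.symm_apply_apply, hρ.1 (e.symm y),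
      Equiv.apply_symm_apply]
  · rwa [Equiv.permCongr_apply, ← Equiv.eq_symm_apply] at hy

theorem IsPairing.subtypePerm {ρ : Perm X} (hρ : IsPairing ρ) {p : X → Prop}
    (hp : ∀ x, p (ρ x) ↔ p x) : IsPairing (ρ.subtypePerm hp) :=
  ⟨fun x => Subtype.ext (hρ.1 x), fun x hx => hρ.2 x (congrArg Subtype.val hx)⟩

theorem IsPairing.sq_eq_one {ρ : Perm X} (hρ : IsPairing ρ) : ρ ^ 2 = 1 := by
  ext x
  rw [pow_two, Equiv.Perm.mul_apply, hρ.1 x, Equiv.Perm.one_apply]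

theorem IsPairing.support_eq_univ [Fintype X] [DecidableEq X] {ρ : Perm X} (hρ : IsPairing ρ) :
    ρ.support = Finset.univ :=
  Finset.eq_univ_of_forall fun x => Equiv.Perm.mem_support.mpr (hρ.2 x)

theorem IsPairing.even_card [Finite X] {ρ : Perm X} (hρ : IsPairing ρ) : Even (Nat.card X) := by
  classical
  have := Fintype.ofFinite X
  rw [even_iff_two_dvd, Nat.card_eq_fintype_card, ← Finset.card_univ, ← hρ.support_eq_univ]
  exact Equiv.Perm.two_dvd_card_support hρ.sq_eq_one

theorem isPairing_iff_cycleType_eq_replicate [Fintype X] [DecidableEq X] {M : ℕ}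
    (hM : Fintype.card X = 2 * M) (ρ : Perm X) :
    IsPairing ρ ↔ ρ.cycleType = Multiset.replicate M 2 := by
  have : Fact (Nat.Prime 2) := ⟨Nat.prime_two⟩
  have hsum := ρ.sum_cycleType
  refine ⟨fun hρ => ?_, fun h => ?_⟩
  · have hrep := Equiv.Perm.cycleType_of_pow_prime_eq_one hρ.sq_eq_one
    rw [hρ.support_eq_univ, Finset.card_univ, hM, hrep, Multiset.sum_replicate, smul_eq_mul] at hsum
    rw [hrep, show ρ.cycleType.card = M by omega]
  · have hsq : ρ ^ 2 = 1 := Equiv.Perm.pow_prime_eq_one_iff.mpr fun c hc =>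
      Multiset.eq_of_mem_replicate (h ▸ hc)
    have hsupport : ρ.support = Finset.univ := by
      rw [← Finset.card_eq_iff_eq_univ, ← hsum, h, Multiset.sum_replicate, hM, smul_eq_mul,
        mul_comm]
    refine ⟨fun x => ?_, fun x => Equiv.Perm.mem_support.mp (hsupport ▸ Finset.mem_univ x)⟩
    rw [← Equiv.Perm.mul_apply, ← pow_two, hsq, Equiv.Perm.one_apply]

theorem pairingCount_eq_doubleFactorial [Finite X] {M : ℕ} (hM : Nat.card X = 2 * M) :
    pairingCount X = (2 * M - 1)‼ := by
  classical
  have := Fintype.ofFinite X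
  rw [Nat.card_eq_fintype_card] at hM
  have hcount : pairingCount X =
      Finset.card {g : Perm X | g.cycleType = Multiset.replicate M 2} := by
    rw [← Fintype.card_subtype, ← Nat.card_eq_fintype_card]
    exact Nat.card_congr (Equiv.subtypeEquivRight (isPairing_iff_cycleType_eq_replicate hM))
  have hprod : ∏ n ∈ (Multiset.replicate M 2).toFinset, ((Multiset.replicate M 2).count n)! =
      M ! := by
    rcases eq_or_ne M 0 with rfl | hM0
    · simp
    · simp [Multiset.toFinset_replicate, hM0]
  have h := Equiv.Perm.card_of_cycleType_mul_eq X (Multiset.replicate M 2)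
  rw [← hcount, hprod, Multiset.sum_replicate, Multiset.prod_replicate, hM, smul_eq_mul,
    mul_comm M 2, Nat.sub_self, Nat.factorial_zero, one_mul, ← Nat.doubleFactorial_two_mul,
    if_pos ⟨le_rfl, fun a ha => (Multiset.eq_of_mem_replicate ha).ge⟩] at h
  refine Nat.eq_of_mul_eq_mul_right (Nat.doubleFactorial_pos (2 * M)) (h.trans ?_)
  cases M with
  | zero => simp
  | succ M => exact (Nat.factorial_eq_mul_doubleFactorial (2 * M + 1)).trans (mul_comm _ _)

theorem pairingCount_eq_zero_of_odd [Finite X] (hX : Odd (Nat.card X)) : pairingCount X = 0 := by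
  have : IsEmpty {ρ : Perm X // IsPairing ρ} :=
    ⟨fun ρ => Nat.not_even_iff_odd.mpr hX ρ.2.even_card⟩
  exact Nat.card_of_isEmpty

theorem add_one_pow_le_three_mul_pow {x : ℝ} {i : ℕ} (hi : i ≤ x) :
    (x + 1) ^ i ≤ 3 * x ^ i := by
  rcases i.eq_zero_or_pos with rfl | hi0
  · norm_num
  have hx : 0 < x := (Nat.cast_pos.mpr hi0).trans_le hi
  calc (x + 1) ^ i = (1 / x + 1) ^ i * x ^ i := by
          rw [← mul_pow, add_mul, one_div_mul_cancel hx.ne', one_mul, add_comm x]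
    _ ≤ exp (1 / x) ^ i * x ^ i := by gcongr; exact add_one_le_exp _
    _ = exp (i / x) * x ^ i := by rw [← exp_nat_mul, mul_one_div]
    _ ≤ 3 * x ^ i := by
      gcongr
      exact (exp_le_exp.mpr ((div_le_one hx).mpr hi)).trans exp_one_lt_three.le

theorem doubleFactorial_mul_pow_le (a i : ℕ) :
    ((2 * a - 1)‼ : ℝ) * (a + i) ^ i ≤ (2 * (a + i) - 1)‼ * 3 ^ i := by
  induction i with
  | zero => simp
  | succ i ih =>
    have hsucc : (2 * (a + (i + 1)) - 1)‼ = (2 * (a + i) + 1) * (2 * (a + i) - 1)‼ :=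
      Nat.doubleFactorial_add_one (2 * (a + i))
    have hbase : (a : ℝ) + (i + 1) ≤ 2 * (a + i) + 1 := by linarith [a.cast_nonneg (α := ℝ)]
    rw [hsucc]
    push_cast
    calc ((2 * a - 1)‼ : ℝ) * (a + (i + 1)) ^ (i + 1)
        = (a + (i + 1)) * ((2 * a - 1)‼ * (a + i + 1) ^ i) := by ring
      _ ≤ (2 * (a + i) + 1) * ((2 * a - 1)‼ * (3 * (a + i) ^ i)) := by
        gcongr
        exact add_one_pow_le_three_mul_pow (by linarith [a.cast_nonneg (α := ℝ)])
      _ = (2 * (a + i) + 1) * 3 * ((2 * a - 1)‼ * (a + i) ^ i) := by ring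
      _ ≤ (2 * (a + i) + 1) * 3 * ((2 * (a + i) - 1)‼ * 3 ^ i) := by gcongr
      _ = _ := by ring

theorem pairingCount_le_mul_sqrt_pow [Finite X] [Finite Y] {M t : ℕ} (hX : Nat.card X = 2 * M)
    (hY : Nat.card Y + t = 2 * M) :
    (pairingCount Y : ℝ) ≤ pairingCount X * √(3 / M) ^ t := by
  rcases Nat.even_or_odd' (Nat.card Y) with ⟨a, ha | ha⟩
  · obtain ⟨i, rfl⟩ : ∃ i, M = a + i := ⟨M - a, by omega⟩
    obtain rfl : t = 2 * i := by omega
    rw [pairingCount_eq_doubleFactorial ha, pairingCount_eq_doubleFactorial hX, pow_mul,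
      sq_sqrt (by positivity)]
    rcases i.eq_zero_or_pos with rfl | hi
    · simp
    · rw [div_pow, ← mul_div_assoc, le_div_iff₀ (by positivity)]
      exact_mod_cast doubleFactorial_mul_pow_le a i
  · rw [pairingCount_eq_zero_of_odd ⟨a, ha⟩, Nat.cast_zero]
    positivity

end Pairing

/-- The number of ordered pairs `(x, ρ x)` coloured `(a, b)`. When `X` is a set of half-edges, `c`
sends a half-edge to its endpoint and `ρ` is a pairing, this is the number of edges between two
distinct vertices `a` and `b`, and twice the number of loops if `a = b`. -/
noncomputable def arcCount {X C : Type*} (c : X → C) (ρ : Perm X) (a b : C) : ℕ :=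
  Nat.card {x // c x = a ∧ c (ρ x) = b}

section ColouredPairing

variable {X Y C D : Type*} {c : X → C} {ρ : Perm X} {P : X → Prop}

theorem arcCount_permCongr (c : X → C) (ρ : Perm X) {c' : Y → D} {κ : C → D}
    (hκ : Function.Injective κ) {e : X ≃ Y} (he : ∀ x, c' (e x) = κ (c x)) (a b : C) :
    arcCount c' (e.permCongr ρ) (κ a) (κ b) = arcCount c ρ a b := by
  refine (Nat.card_congr (e.subtypeEquiv fun x => ?_)).symm
  rw [Equiv.permCongr_apply, Equiv.symm_apply_apply, he, he, hκ.eq_iff, hκ.eq_iff]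

theorem sum_arcCount [Finite X] [Fintype C] (c : X → C) (ρ : Perm X) (a : C) :
    ∑ b, arcCount c ρ a b = Nat.card {x // c x = a} := by
  have e (b : C) : {x : {x // c x = a} // c (ρ x) = b} ≃ {x // c x = a ∧ c (ρ x) = b} :=
    Equiv.subtypeSubtypeEquivSubtypeInter (fun x => c x = a) fun x => c (ρ x) = b
  rw [← Nat.card_congr (Equiv.sigmaFiberEquiv fun x : {x // c x = a} => c (ρ x)), Nat.card_sigma]
  exact Finset.sum_congr rfl fun b _ => (Nat.card_congr (e b)).symm

theorem IsPairing.arcCount_comm (hρ : IsPairing ρ) (c : X → C) (a b : C) :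
    arcCount c ρ a b = arcCount c ρ b a := by
  refine Nat.card_congr (ρ.subtypeEquiv fun x => ?_)
  rw [hρ.1 x, and_comm]

theorem IsPairing.mem_loop_arcs_iff (hρ : IsPairing ρ) (c : X → C) (a : C) (x : X) :
    (c (ρ x) = a ∧ c (ρ (ρ x)) = a) ↔ c x = a ∧ c (ρ x) = a := by
  rw [hρ.1 x, and_comm]

theorem IsPairing.even_arcCount_self [Finite X] (hρ : IsPairing ρ) (c : X → C) (a : C) :
    Even (arcCount c ρ a a) :=
  (hρ.subtypePerm (hρ.mem_loop_arcs_iff c a)).even_card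

theorem IsPairing.exists_orientation [LinearOrder C] (hρ : IsPairing ρ) (c : X → C) :
    ∃ P : X → Prop, (∀ x, P (ρ x) ↔ ¬P x) ∧ ∀ x, P x → c x ≤ c (ρ x) := by
  obtain ⟨_, _⟩ := exists_wellFoundedLT X
  refine ⟨fun x => toLex (c x, x) < toLex (c (ρ x), ρ x), fun x => ?_, fun x hx => ?_⟩
  · have hne : toLex (c x, x) ≠ toLex (c (ρ x), ρ x) := fun h =>
      hρ.2 x (congrArg Prod.snd (toLex.injective h)).symm
    simp only [hρ.1 x, not_lt, hne.symm.le_iff_lt]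
  · exact (Prod.Lex.toLex_lt_toLex.mp hx).elim le_of_lt fun h => h.1.le

/-- If `P` selects one point of each pair of `ρ`, then `X` is two copies of `{x // P x}`, exchanged
by `ρ`. -/
noncomputable def IsPairing.orientationEquiv (hρ : IsPairing ρ) (hP : ∀ x, P (ρ x) ↔ ¬P x) :
    {x // P x} × Bool ≃ X :=
  Equiv.ofBijective (fun q => if q.2 then ρ q.1 else q.1) <| by
    refine ⟨?_, fun x => ?_⟩
    · rintro ⟨⟨x, hx⟩, _ | _⟩ ⟨⟨y, hy⟩, _ | _⟩ hxy <;>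
        simp only [Bool.false_eq_true, if_true, if_false] at hxy
      · simp only [hxy]
      · exact absurd (hxy ▸ hx) (by rwa [hP, not_not])
      · exact absurd (hxy ▸ hy) (by rwa [hP, not_not])
      · simp only [ρ.injective hxy]
    · by_cases hx : P x
      · exact ⟨(⟨x, hx⟩, false), rfl⟩
      · exact ⟨(⟨ρ x, (hP x).mpr hx⟩, true), hρ.1 x⟩

theorem IsPairing.orientationEquiv_not (hρ : IsPairing ρ) (hP : ∀ x, P (ρ x) ↔ ¬P x)
    (x : {x // P x}) (b : Bool) :
    hρ.orientationEquiv hP (x, !b) = ρ (hρ.orientationEquiv hP (x, b)) := by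
  cases b
  · rfl
  · exact (hρ.1 x).symm

theorem IsPairing.two_mul_card_oriented (hρ : IsPairing ρ) (hP : ∀ x, P (ρ x) ↔ ¬P x) :
    2 * Nat.card {x // P x} = Nat.card X := by
  rw [← Nat.card_congr (hρ.orientationEquiv hP), Nat.card_prod,
    Nat.card_eq_fintype_card (α := Bool), Fintype.card_bool, mul_comm]

theorem IsPairing.card_oriented_arcs [LinearOrder C] (hρ : IsPairing ρ)
    (hP : ∀ x, P (ρ x) ↔ ¬P x) (hle : ∀ x, P x → c x ≤ c (ρ x)) (p : C × C) :
    Nat.card {x : {x // P x} // (c x, c (ρ x)) = p} =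
      if p.1 = p.2 then arcCount c ρ p.1 p.2 / 2
      else if p.1 < p.2 then arcCount c ρ p.1 p.2 else 0 := by
  obtain ⟨a, b⟩ := p
  simp only [Prod.mk.injEq]
  split_ifs with heq hlt
  · subst heq
    have htwo : 2 * Nat.card {x : {x // c x = a ∧ c (ρ x) = a} // P x} = arcCount c ρ a a :=
      (hρ.subtypePerm (hρ.mem_loop_arcs_iff c a)).two_mul_card_oriented fun x => hP x
    rw [← htwo, Nat.mul_div_cancel_left _ two_pos]
    have e : {x : {x // P x} // c x = a ∧ c (ρ x) = a} ≃
        {x : {x // c x = a ∧ c (ρ x) = a} // P x} :=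
      (Equiv.subtypeSubtypeEquivSubtypeInter P fun x => c x = a ∧ c (ρ x) = a).trans
        ((Equiv.subtypeEquivRight fun x => and_comm).trans
          (Equiv.subtypeSubtypeEquivSubtypeInter (fun x => c x = a ∧ c (ρ x) = a) P).symm)
    exact Nat.card_congr e
  · have hmem (x : X) (hx : c x = a ∧ c (ρ x) = b) : P x := by
      by_contra hPx
      have := hle (ρ x) ((hP x).mpr hPx)
      rw [hρ.1 x, hx.1, hx.2] at this
      exact this.not_gt hlt
    exact Nat.card_congr (Equiv.subtypeSubtypeEquivSubtype fun {x} => hmem x)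
  · have : IsEmpty {x : {x // P x} // c x = a ∧ c (ρ x) = b} := by
      refine ⟨fun ⟨⟨x, hPx⟩, hxa, hxb⟩ => hlt ?_⟩
      exact lt_of_le_of_ne (hxa ▸ hxb ▸ hle x hPx) heq
    exact Nat.card_of_isEmpty

theorem exists_equiv_of_card_fiber_eq [Finite X] [Finite Y] {f : X → C} {g : Y → C}
    (h : ∀ a, Nat.card {x // f x = a} = Nat.card {y // g y = a}) :
    ∃ e : X ≃ Y, ∀ x, g (e x) = f x := by
  have hfibre (a : C) : Nonempty ({x // f x = a} ≃ {y // g y = a}) := Finite.card_eq.mp (h a)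
  exact ⟨Equiv.ofFiberEquiv fun a => (hfibre a).some, Equiv.ofFiberEquiv_map _⟩

theorem IsPairing.exists_permCongr_eq [Finite X] [Finite Y] (hρ : IsPairing ρ) {c' : Y → C}
    {ρ' : Perm Y} (hρ' : IsPairing ρ') (h : arcCount c ρ = arcCount c' ρ') :
    ∃ e : X ≃ Y, (∀ x, c' (e x) = c x) ∧ e.permCongr ρ = ρ' := by
  obtain ⟨_, _⟩ := exists_wellFoundedLT C
  obtain ⟨P, hP, hle⟩ := hρ.exists_orientation c
  obtain ⟨P', hP', hle'⟩ := hρ'.exists_orientation c'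
  obtain ⟨θ, hθ⟩ : ∃ θ : {x // P x} ≃ {y // P' y}, ∀ x,
      (c' (θ x), c' (ρ' (θ x))) = (c x, c (ρ x)) :=
    exists_equiv_of_card_fiber_eq (g := fun y : {y // P' y} => (c' y, c' (ρ' y))) fun p => by
      rw [hρ.card_oriented_arcs hP hle, hρ'.card_oriented_arcs hP' hle', h]
  let o := hρ.orientationEquiv hP
  let o' := hρ'.orientationEquiv hP'
  have hcolour : ∀ q, c' (o' (θ q.1, q.2)) = c (o q)
    | (x, false) => congrArg Prod.fst (hθ x)
    | (x, true) => congrArg Prod.snd (hθ x)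
  refine ⟨o.symm.trans ((θ.prodCongr (Equiv.refl Bool)).trans o'), fun x => ?_,
    Equiv.ext fun y => ?_⟩
  · obtain ⟨q, rfl⟩ := o.surjective x
    simpa [Prod.map] using hcolour q
  · obtain ⟨⟨z, b⟩, rfl⟩ := o'.surjective y
    have hz : ρ (o (θ.symm z, b)) = o (θ.symm z, !b) := (hρ.orientationEquiv_not hP _ b).symm
    simpa [hz] using hρ'.orientationEquiv_not hP' z b

end ColouredPairing

/-! ### The configuration model -/

section Realization

variable {V F : Type*}

theorem card_fst_fiber (u : V) : Nat.card {x : V × F // x.1 = u} = Nat.card F :=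
  Nat.card_congr
    { toFun := fun x => x.1.2
      invFun := fun i => ⟨(u, i), rfl⟩
      left_inv := by rintro ⟨⟨v, i⟩, rfl⟩; rfl }

theorem exists_isPairing_arcs {A : V → V → ℕ} (hsymm : ∀ u v, A u v = A v u)
    (heven : ∀ u, Even (A u u)) :
    ∃ ρ : Perm (Σ p : V × V, Fin (A p.1 p.2)), IsPairing ρ ∧
      arcCount (fun a => a.1.1) ρ = A := by
  let rev : (Σ p : V × V, Fin (A p.1 p.2)) → Σ p : V × V, Fin (A p.1 p.2) :=
    fun a => ⟨a.1.swap, Fin.cast (hsymm _ _) a.2.rev⟩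
  have hrev : Function.Involutive rev := by
    rintro ⟨⟨u, v⟩, i⟩
    refine Sigma.ext rfl (heq_of_eq (Fin.ext ?_))
    simp only [rev, Prod.fst_swap, Prod.snd_swap, Fin.val_cast, Fin.val_rev]
    have := hsymm u v
    omega
  refine ⟨hrev.toPerm, ⟨hrev, ?_⟩, funext₂ fun u v => ?_⟩
  · rintro ⟨⟨u, v⟩, i⟩ h
    obtain ⟨hp, hi⟩ := Sigma.mk.inj h
    obtain rfl : v = u := congrArg Prod.fst hp
    obtain ⟨n, hn⟩ := heven v
    have hval := congrArg Fin.val (eq_of_heq hi)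
    simp only [Fin.val_cast, Fin.val_rev, Prod.swap_prod_mk] at hval
    omega
  · rw [← Nat.card_fin (A u v)]
    refine Nat.card_congr ((Equiv.subtypeEquivRight fun a => ?_).trans
      (Equiv.sigmaSubtype (β := fun p : V × V => Fin (A p.1 p.2)) (u, v)))
    exact (Prod.ext_iff (x := a.1) (y := (u, v))).symm

/-- The multiplicity matrices of the pairings of the half-edges `V × F`. Each vertex of `V` carries
a copy of `F`, so these are the adjacency matrices, loops counted twice, of the multigraphs on `V`
that are regular of degree `Nat.card F`. -/
def pairingMatrices (V F : Type*) : Set (V → V → ℕ) :=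
  arcCount Prod.fst '' {ρ : Perm (V × F) | IsPairing ρ}

theorem mem_pairingMatrices_iff [Fintype V] [Finite F] {A : V → V → ℕ} :
    A ∈ pairingMatrices V F ↔
      (∀ u v, A u v = A v u) ∧ (∀ u, Even (A u u)) ∧ ∀ u, ∑ v, A u v = Nat.card F := by
  constructor
  · rintro ⟨ρ, hρ, rfl⟩
    exact ⟨hρ.arcCount_comm _, hρ.even_arcCount_self _,
      fun u => (sum_arcCount _ _ u).trans (card_fst_fiber u)⟩
  · rintro ⟨hsymm, heven, hsum⟩
    obtain ⟨ρ, hρ, hA⟩ := exists_isPairing_arcs hsymm heven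
    obtain ⟨e, he⟩ : ∃ e : (Σ p : V × V, Fin (A p.1 p.2)) ≃ V × F, ∀ a, (e a).1 = a.1.1 :=
      exists_equiv_of_card_fiber_eq fun u => by
        rw [card_fst_fiber, ← hsum u, ← sum_arcCount _ ρ u, hA]
    exact ⟨e.permCongr ρ, hρ.permCongr e,
      (funext₂ (arcCount_permCongr _ ρ Function.injective_id he)).trans hA⟩

end Realization

section Shear

variable {V F : Type*}

/-- The fibrewise action of `V → Perm F` on `V × F`. -/
def fiberwise (V F : Type*) : (V → Perm F) →* Perm (V × F) where
  toFun := Equiv.prodShear 1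
  map_one' := rfl
  map_mul' _ _ := rfl

theorem mem_range_fiberwise_iff {e : Perm (V × F)} :
    e ∈ (fiberwise V F).range ↔ ∀ x, (e x).1 = x.1 := by
  refine ⟨by rintro ⟨τ, rfl⟩ x; rfl, fun he => ?_⟩
  have hmk (v : V) (i : F) : (v, (e (v, i)).2) = e (v, i) := Prod.ext (he (v, i)).symm rfl
  have hsymm (v : V) (i : F) : (v, (e.symm (v, i)).2) = e.symm (v, i) :=
    Prod.ext ((congrArg Prod.fst (e.apply_symm_apply (v, i))).symm.trans (he _)) rfl
  refine ⟨fun v => ⟨fun i => (e (v, i)).2, fun i => (e.symm (v, i)).2, fun i => ?_, fun i => ?_⟩,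
    Equiv.ext fun x => hmk x.1 x.2⟩
  · exact congrArg Prod.snd ((congrArg e.symm (hmk v i)).trans (e.symm_apply_apply (v, i)))
  · exact congrArg Prod.snd ((congrArg e (hsymm v i)).trans (e.apply_symm_apply (v, i)))

theorem permCongr_eq_self_iff_commute {g ρ : Perm V} : g.permCongr ρ = ρ ↔ Commute ρ g :=
  (mul_inv_eq_iff_eq_mul (a := g * ρ)).trans eq_comm

theorem arcCount_prodShear_permCongr (σ : Perm V) (τ : V → Perm F) (ρ : Perm (V × F)) (u v : V) :
    arcCount Prod.fst ((σ.prodShear τ).permCongr ρ) (σ u) (σ v) = arcCount Prod.fst ρ u v :=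
  arcCount_permCongr Prod.fst ρ (e := σ.prodShear τ) σ.injective (fun _ => rfl) u v

theorem IsPairing.arcCount_eq_iff_exists_fiberwise [Finite V] [Finite F] {ρ ρ' : Perm (V × F)}
    (hρ : IsPairing ρ) (hρ' : IsPairing ρ') :
    arcCount Prod.fst ρ = arcCount Prod.fst ρ' ↔ ∃ τ, (fiberwise V F τ).permCongr ρ = ρ' := by
  constructor
  · intro h
    obtain ⟨e, he, hconj⟩ := hρ.exists_permCongr_eq hρ' h
    obtain ⟨τ, rfl⟩ := mem_range_fiberwise_iff.mpr he
    exact ⟨τ, hconj⟩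
  · rintro ⟨τ, rfl⟩
    exact (funext₂ (arcCount_prodShear_permCongr 1 τ ρ)).symm

/-- The number of pairings invariant under `g`. -/
noncomputable def invariantPairingCount {X : Type*} (g : Perm X) : ℕ :=
  Nat.card {ρ : Perm X // IsPairing ρ ∧ Commute ρ g}

-- The pairings with matrix `A` form a single orbit of `V → Perm F`. Commuting with the shear over
-- `σ` given by `τ` means that `τ` moves `ρ` to its conjugate by `σ⁻¹`, so `ρ` sees as many `τ` as
-- its stabilizer has elements.
theorem card_invariant_pairings_of_matrix [Finite V] [Finite F] {A : V → V → ℕ}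
    (hA : A ∈ pairingMatrices V F) {σ : Perm V} (hσ : ∀ u v, A (σ u) (σ v) = A u v) :
    Nat.card {q : (V → Perm F) × Perm (V × F) //
      (IsPairing q.2 ∧ arcCount Prod.fst q.2 = A) ∧ Commute q.2 (σ.prodShear q.1)} =
      Nat.card (V → Perm F) := by
  obtain ⟨ρ₀, hρ₀ : IsPairing ρ₀, rfl⟩ := hA
  let S : Perm (V × F) := σ.prodShear 1
  let _ : MulAction (V → Perm F) (Perm (V × F)) :=
    MulAction.compHom _ (MulAut.conj.comp (fiberwise V F))
  have horbit (ρ : Perm (V × F)) : ρ ∈ MulAction.orbit (V → Perm F) ρ₀ ↔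
      IsPairing ρ ∧ arcCount Prod.fst ρ = arcCount Prod.fst ρ₀ := by
    refine ⟨fun ⟨τ, hτ⟩ => ?_, fun ⟨hρ, h⟩ => ?_⟩
    · have hρ : IsPairing ρ := hτ ▸ hρ₀.permCongr (fiberwise V F τ)
      exact ⟨hρ, ((hρ₀.arcCount_eq_iff_exists_fiberwise hρ).mpr ⟨τ, hτ⟩).symm⟩
    · exact (hρ₀.arcCount_eq_iff_exists_fiberwise hρ).mp h.symm
  have hS (ρ : Perm (V × F)) (hρ : ρ ∈ MulAction.orbit (V → Perm F) ρ₀) :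
      S.permCongr.symm ρ ∈ MulAction.orbit (V → Perm F) ρ₀ := by
    obtain ⟨hpair, hcount⟩ := (horbit ρ).mp hρ
    refine (horbit _).mpr ⟨hpair.permCongr S.symm, funext₂ fun u v => ?_⟩
    rw [← hσ u v, ← hcount, ← arcCount_prodShear_permCongr σ 1, Equiv.apply_symm_apply]
  rw [← card_smul_eq_on_orbit ρ₀ (fun ρ => S.permCongr.symm ρ) hS]
  refine Nat.card_congr (Equiv.subtypeEquivRight fun q => and_congr (horbit q.2).symm ?_)
  exact permCongr_eq_self_iff_commute.symm.trans
    (S.permCongr.eq_symm_apply (y := (fiberwise V F q.1).permCongr q.2)).symm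

theorem finite_pairingMatrices [Finite V] [Finite F] : (pairingMatrices V F).Finite :=
  (Set.toFinite _).image _

theorem sum_invariantPairingCount_prodShear [Fintype V] [DecidableEq V] [Fintype F] [DecidableEq F]
    (σ : Perm V) :
    ∑ τ : V → Perm F, invariantPairingCount (σ.prodShear τ) = Nat.card (V → Perm F) *
      Nat.card {A // A ∈ pairingMatrices V F ∧ ∀ u v, A (σ u) (σ v) = A u v} := by
  let Inv := {A // A ∈ pairingMatrices V F ∧ ∀ u v, A (σ u) (σ v) = A u v}
  let Q := {q : (V → Perm F) × Perm (V × F) // IsPairing q.2 ∧ Commute q.2 (σ.prodShear q.1)}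
  have : Finite Inv := (finite_pairingMatrices.subset (Set.sep_subset _ _)).to_subtype
  have := Fintype.ofFinite Inv
  let matrix (q : Q) : Inv := ⟨arcCount Prod.fst q.1.2, ⟨_, q.2.1, rfl⟩, fun u v => by
    conv_lhs => rw [← permCongr_eq_self_iff_commute.mpr q.2.2]
    exact arcCount_prodShear_permCongr σ q.1.1 q.1.2 u v⟩
  have hfibre (A : Inv) : Nat.card {q : Q // matrix q = A} = Nat.card (V → Perm F) := by
    rw [← card_invariant_pairings_of_matrix A.2.1 A.2.2]
    exact Nat.card_congr
      { toFun := fun q => ⟨q.1.1, ⟨q.1.2.1, congrArg Subtype.val q.2⟩, q.1.2.2⟩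
        invFun := fun q => ⟨⟨q.1, q.2.1.1, q.2.2⟩, Subtype.ext q.2.1.2⟩ }
  calc ∑ τ : V → Perm F, invariantPairingCount (σ.prodShear τ) = Nat.card Q := by
        rw [Nat.card_congr (Equiv.subtypeProdEquivSigmaSubtype fun τ ρ =>
          IsPairing ρ ∧ Commute ρ (σ.prodShear τ)), Nat.card_sigma]
        rfl
    _ = ∑ A : Inv, Nat.card {q : Q // matrix q = A} := by
        rw [← Nat.card_sigma, Nat.card_congr (Equiv.sigmaFiberEquiv matrix)]
    _ = Nat.card (V → Perm F) * Nat.card Inv := by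
        rw [Fintype.sum_congr _ _ hfibre, Finset.sum_const, Finset.card_univ, smul_eq_mul, mul_comm,
          Nat.card_eq_fintype_card (α := Inv)]

end Shear

section Multigraph

/-- The adjacency matrix of a multigraph, in which a loop counts twice because it uses two
half-edges. -/
def adjacency {V : Type*} [DecidableEq V] (m : V → V → ℕ) (u v : V) : ℕ :=
  if u = v then 2 * m u v else m u v

variable {V : Type*} [DecidableEq V] {N : ℕ}

theorem adjacency_self (m : V → V → ℕ) (u : V) : adjacency m u u = 2 * m u u := if_pos rfl

theorem adjacency_of_ne (m : V → V → ℕ) {u v : V} (h : u ≠ v) : adjacency m u v = m u v := if_neg h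

theorem adjacency_eq_adjacency_iff (m m' : V → V → ℕ) {u v u' v' : V} (h : u = v ↔ u' = v') :
    adjacency m u v = adjacency m' u' v' ↔ m u v = m' u' v' := by
  by_cases huv : u = v
  · rw [adjacency, adjacency, if_pos huv, if_pos (h.mp huv)]
    omega
  · rw [adjacency_of_ne m huv, adjacency_of_ne m' (mt h.mpr huv)]

theorem adjacency_injective : Function.Injective (adjacency (V := V)) := fun m m' h =>
  funext₂ fun u v => (adjacency_eq_adjacency_iff m m' Iff.rfl).mp (congrFun₂ h u v)

theorem exists_adjacency_eq {A : V → V → ℕ} (heven : ∀ u, Even (A u u)) :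
    ∃ m, adjacency m = A := by
  refine ⟨fun u v => if u = v then A u v / 2 else A u v, funext₂ fun u v => ?_⟩
  by_cases h : u = v
  · subst h
    rw [adjacency_self, if_pos rfl, Nat.two_mul_div_two_of_even (heven u)]
  · rw [adjacency_of_ne _ h, if_neg h]

theorem isCubic_iff_adjacency_mem {m : Fin N → Fin N → ℕ} :
    IsCubic m ↔ adjacency m ∈ pairingMatrices (Fin N) (Fin 3) := by
  have hsum (u : Fin N) :
      ∑ v, adjacency m u v = 2 * m u u + ∑ v ∈ Finset.univ.erase u, m u v := by
    rw [← Finset.add_sum_erase _ _ (Finset.mem_univ u), adjacency_self]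
    congr 1
    exact Finset.sum_congr rfl fun v hv => adjacency_of_ne m (Finset.ne_of_mem_erase hv).symm
  have hsymm : (∀ u v, adjacency m u v = adjacency m v u) ↔ ∀ u v, m u v = m v u :=
    forall₂_congr fun u v => adjacency_eq_adjacency_iff m m eq_comm
  have heven (u : Fin N) : Even (adjacency m u u) := adjacency_self m u ▸ even_two_mul _
  rw [mem_pairingMatrices_iff, hsymm, IsCubic]
  simp only [hsum, heven, implies_true, true_and, Nat.card_eq_fintype_card, Fintype.card_fin]

theorem finite_isCubic : {m : Fin N → Fin N → ℕ | IsCubic m}.Finite :=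
  (finite_pairingMatrices.preimage adjacency_injective.injOn).subset
    fun _ => isCubic_iff_adjacency_mem.mp

theorem card_invariant_isCubic_eq (σ : Perm (Fin N)) :
    Nat.card {m : Fin N → Fin N → ℕ // IsCubic m ∧ ∀ u v, m (σ u) (σ v) = m u v} =
      Nat.card {A // A ∈ pairingMatrices (Fin N) (Fin 3) ∧ ∀ u v, A (σ u) (σ v) = A u v} := by
  have hiff (m : Fin N → Fin N → ℕ) : (IsCubic m ∧ ∀ u v, m (σ u) (σ v) = m u v) ↔
      adjacency m ∈ pairingMatrices (Fin N) (Fin 3) ∧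
        ∀ u v, adjacency m (σ u) (σ v) = adjacency m u v :=
    and_congr isCubic_iff_adjacency_mem (forall₂_congr fun u v =>
      (adjacency_eq_adjacency_iff m m σ.injective.eq_iff).symm)
  refine Nat.card_eq_of_bijective (Subtype.map adjacency fun m => (hiff m).mp)
    ⟨Subtype.map_injective _ adjacency_injective, ?_⟩
  rintro ⟨A, hA⟩
  obtain ⟨m, rfl⟩ := exists_adjacency_eq (mem_pairingMatrices_iff.mp hA.1).2.1
  exact ⟨⟨m, (hiff m).mpr hA⟩, rfl⟩

theorem sum_invariantPairingCount_eq_mul_card_isCubic (σ : Perm (Fin N)) :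
    ∑ τ : Fin N → Perm (Fin 3), invariantPairingCount (σ.prodShear τ) =
      6 ^ N * Nat.card {m : Fin N → Fin N → ℕ // IsCubic m ∧ ∀ u v, m (σ u) (σ v) = m u v} := by
  have hcard : Nat.card (Fin N → Perm (Fin 3)) = 6 ^ N := by
    rw [Nat.card_fun, Nat.card_perm, Nat.card_fin, Nat.card_fin]
    rfl
  rw [sum_invariantPairingCount_prodShear, card_invariant_isCubic_eq, hcard]

theorem invariantPairingCount_one (X : Type*) :
    invariantPairingCount (1 : Perm X) = pairingCount X :=
  Nat.card_congr (Equiv.subtypeEquivRight fun ρ => and_iff_left (Commute.one_right ρ))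

theorem pairingCount_le_six_pow_mul_card_isCubic (N : ℕ) :
    pairingCount (Fin N × Fin 3) ≤ 6 ^ N * Nat.card {m : Fin N → Fin N → ℕ // IsCubic m} := by
  have h := sum_invariantPairingCount_eq_mul_card_isCubic (1 : Perm (Fin N))
  simp only [Equiv.Perm.one_apply, implies_true, and_true] at h
  rw [← h, ← invariantPairingCount_one]
  exact Finset.single_le_sum (f := fun τ : Fin N → Perm (Fin 3) =>
    invariantPairingCount ((1 : Perm (Fin N)).prodShear τ)) (fun _ _ => Nat.zero_le _)
    (Finset.mem_univ 1)

end Multigraph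

/-! ### Pairings invariant under a permutation -/

section InvariantPairing

theorem dvd_sub_of_dvd_two_mul {l a b : ℤ} (ha : l ∣ 2 * a) (ha' : ¬l ∣ a) (hb : l ∣ 2 * b)
    (hb' : ¬l ∣ b) : l ∣ a - b := by
  obtain ⟨c, hc⟩ := ha
  obtain ⟨d, hd⟩ := hb
  rcases Int.even_or_odd' c with ⟨c', rfl | rfl⟩
  · exact absurd ⟨c', by linarith⟩ ha'
  rcases Int.even_or_odd' d with ⟨d', rfl | rfl⟩
  · exact absurd ⟨d', by linarith⟩ hb'
  exact ⟨c' - d', by linarith⟩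

variable {X : Type*} {ρ ρ' g : Perm X}

theorem apply_zpow_of_commute (h : Commute ρ g) (z : ℤ) (x : X) :
    ρ ((g ^ z) x) = (g ^ z) (ρ x) :=
  DFunLike.congr_fun (h.zpow_right z).eq x

theorem sameCycle_apply_of_commute (h : Commute ρ g) {x y : X} (hxy : g.SameCycle x y) :
    g.SameCycle (ρ x) (ρ y) := by
  obtain ⟨z, rfl⟩ := hxy
  exact ⟨z, (apply_zpow_of_commute h z x).symm⟩

theorem apply_eq_apply_of_sameCycle (h : Commute ρ g) (h' : Commute ρ' g) {x y : X}
    (hxy : g.SameCycle x y) (hx : ρ x = ρ' x) : ρ y = ρ' y := by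
  obtain ⟨z, rfl⟩ := hxy
  rw [apply_zpow_of_commute h, apply_zpow_of_commute h', hx]

theorem apply_eq_self_iff_of_commute (h : Commute ρ g) (x : X) : g (ρ x) = ρ x ↔ g x = x := by
  rw [← zpow_one g, ← apply_zpow_of_commute h, ρ.apply_eq_iff_eq]

-- An invariant pairing that preserves a cycle can only be the half-turn of that cycle.
theorem IsPairing.apply_eq_of_sameCycle_apply (hρ : IsPairing ρ) (hρ' : IsPairing ρ')
    (h : Commute ρ g) (h' : Commute ρ' g) {x : X} (hx : g.SameCycle x (ρ x))
    (hx' : g.SameCycle x (ρ' x)) : ρ x = ρ' x := by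
  have period {ρ : Perm X} (hρ : IsPairing ρ) (h : Commute ρ g) {a : ℤ} (ha : (g ^ a) x = ρ x) :
      (Function.minimalPeriod (g • ·) x : ℤ) ∣ 2 * a ∧
        ¬(Function.minimalPeriod (g • ·) x : ℤ) ∣ a := by
    rw [← MulAction.zpow_smul_eq_iff_minimalPeriod_dvd,
      ← MulAction.zpow_smul_eq_iff_minimalPeriod_dvd, Equiv.Perm.smul_def, Equiv.Perm.smul_def, ha]
    refine ⟨?_, hρ.2 x⟩
    rw [two_mul, zpow_add, Equiv.Perm.mul_apply, ha, ← apply_zpow_of_commute h, ha, hρ.1]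
  obtain ⟨a, ha⟩ := hx
  obtain ⟨b, hb⟩ := hx'
  obtain ⟨ha₂, ha₁⟩ := period hρ h ha
  obtain ⟨hb₂, hb₁⟩ := period hρ' h' hb
  have hab : (g ^ (a - b)) x = x :=
    MulAction.zpow_smul_eq_iff_minimalPeriod_dvd.mpr (dvd_sub_of_dvd_two_mul ha₂ ha₁ hb₂ hb₁)
  rw [← ha, ← hb, ← add_sub_cancel b a, zpow_add, Equiv.Perm.mul_apply, hab]

variable [Fintype X] [DecidableEq X]

theorem card_cycleType_eq_card_cycleFactorsFinset (g : Perm X) :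
    g.cycleType.card = g.cycleFactorsFinset.card := by
  rw [Equiv.Perm.cycleType_def, Multiset.card_map, Finset.card_val]

theorem cycleOf_apply_mem_cycleFactorsFinset_iff (h : Commute ρ g) {x : X} :
    g.cycleOf (ρ x) ∈ g.cycleFactorsFinset ↔ g.cycleOf x ∈ g.cycleFactorsFinset := by
  rw [Equiv.Perm.cycleOf_mem_cycleFactorsFinset_iff, Equiv.Perm.cycleOf_mem_cycleFactorsFinset_iff,
    Equiv.Perm.mem_support, Equiv.Perm.mem_support, ne_eq, apply_eq_self_iff_of_commute h]

variable [LinearOrder (Perm X)]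

/-- The nontrivial cycles of `g` that `ρ` sends to a larger cycle, for a fixed arbitrary order. An
invariant pairing is determined by its values on these cycles and on the fixed points of `g`. -/
def ascents (a : g.Basis) (ρ : Perm X) : Finset g.cycleFactorsFinset :=
  {c | g.cycleOf (a c) < g.cycleOf (ρ (a c))}

theorem cycleOf_mem_ascents_iff {a : g.Basis} (h : Commute ρ g) {x : X}
    (hx : g.cycleOf x ∈ g.cycleFactorsFinset) :
    ⟨g.cycleOf x, hx⟩ ∈ ascents a ρ ↔ g.cycleOf x < g.cycleOf (ρ x) := by
  have hcycle := a.sameCycle hx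
  rw [ascents, Finset.mem_filter_univ, hcycle.cycleOf_eq,
    (sameCycle_apply_of_commute h hcycle).cycleOf_eq]

theorem IsPairing.two_mul_card_ascents_le (hρ : IsPairing ρ) (h : Commute ρ g) (a : g.Basis) :
    2 * (ascents a ρ).card ≤ g.cycleType.card := by
  have hmem (c : g.cycleFactorsFinset) : g.cycleOf (a c) ∈ g.cycleFactorsFinset := by
    rw [a.cycleOf_eq]
    exact c.2
  let partner (c : g.cycleFactorsFinset) : g.cycleFactorsFinset :=
    ⟨g.cycleOf (ρ (a c)), (cycleOf_apply_mem_cycleFactorsFinset_iff h).mpr (hmem c)⟩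
  have hinj : Function.Injective partner := fun c d hcd => by
    have hsame : g.SameCycle (ρ (a c)) (ρ (a d)) :=
      (Equiv.Perm.sameCycle_iff_cycleOf_eq_of_mem_support
        (Equiv.Perm.cycleOf_mem_cycleFactorsFinset_iff.mp (partner c).2)
        (Equiv.Perm.cycleOf_mem_cycleFactorsFinset_iff.mp (partner d).2)).mpr
        (congrArg Subtype.val hcd)
    have hback := (sameCycle_apply_of_commute h hsame).cycleOf_eq
    rwa [hρ.1, hρ.1, a.cycleOf_eq, a.cycleOf_eq, Subtype.val_inj] at hback
  have hle : (ascents a ρ).card ≤ (ascents a ρ)ᶜ.card := by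
    refine Finset.card_le_card_of_injOn partner (fun c hc => ?_) hinj.injOn
    rw [Finset.mem_coe, Finset.mem_compl, cycleOf_mem_ascents_iff h, hρ.1]
    exact (Finset.mem_filter_univ _).mp hc |>.not_gt
  have hcard := Finset.card_add_card_compl (ascents a ρ)
  rw [Fintype.card_coe] at hcard
  rw [card_cycleType_eq_card_cycleFactorsFinset]
  omega

theorem IsPairing.eq_of_ascents_of_cycleOf_ne (hρ : IsPairing ρ) (hρ' : IsPairing ρ')
    (h : Commute ρ g) (h' : Commute ρ' g) {a : g.Basis}
    (hval : ∀ c ∈ ascents a ρ, ρ (a c) = ρ' (a c)) {x : X} (hx : x ∈ g.support)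
    (hne : g.cycleOf x ≠ g.cycleOf (ρ x)) : ρ x = ρ' x := by
  have eq_of_lt {x : X} (hx : g.cycleOf x ∈ g.cycleFactorsFinset)
      (hlt : g.cycleOf x < g.cycleOf (ρ x)) : ρ x = ρ' x :=
    apply_eq_apply_of_sameCycle h h' (a.sameCycle hx)
      (hval _ ((cycleOf_mem_ascents_iff h hx).mpr hlt))
  have hmem := Equiv.Perm.cycleOf_mem_cycleFactorsFinset_iff.mpr hx
  rcases hne.lt_or_gt with hlt | hgt
  · exact eq_of_lt hmem hlt
  · have hback := eq_of_lt ((cycleOf_apply_mem_cycleFactorsFinset_iff h).mpr hmem)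
      (by rwa [hρ.1])
    rw [hρ.1] at hback
    rw [hback, hρ'.1, ← hback]

theorem IsPairing.eq_of_ascents (hρ : IsPairing ρ) (hρ' : IsPairing ρ') (h : Commute ρ g)
    (h' : Commute ρ' g) {a : g.Basis} (hasc : ascents a ρ = ascents a ρ')
    (hval : ∀ c ∈ ascents a ρ, ρ (a c) = ρ' (a c)) {x : X} (hx : x ∈ g.support) :
    ρ x = ρ' x := by
  have sameCycle {ρ : Perm X} (h : Commute ρ g) (heq : g.cycleOf x = g.cycleOf (ρ x)) :
      g.SameCycle x (ρ x) :=
    (Equiv.Perm.sameCycle_iff_cycleOf_eq_of_mem_support hx <|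
      Equiv.Perm.cycleOf_mem_cycleFactorsFinset_iff.mp <|
        (cycleOf_apply_mem_cycleFactorsFinset_iff h).mpr <|
          Equiv.Perm.cycleOf_mem_cycleFactorsFinset_iff.mpr hx).mpr heq
  by_cases hne : g.cycleOf x = g.cycleOf (ρ x)
  · by_cases hne' : g.cycleOf x = g.cycleOf (ρ' x)
    · exact hρ.apply_eq_of_sameCycle_apply hρ' h h' (sameCycle h hne) (sameCycle h' hne')
    · refine (hρ'.eq_of_ascents_of_cycleOf_ne hρ h' h (a := a) (fun c hc => ?_) hx hne').symm
      exact (hval c (hasc ▸ hc)).symm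
  · exact hρ.eq_of_ascents_of_cycleOf_ne hρ' h h' hval hx hne

theorem card_invariant_pairings_with_ascents_le (a : g.Basis) (L : Finset g.cycleFactorsFinset) :
    Nat.card {ρ : Perm X // (IsPairing ρ ∧ Commute ρ g) ∧ ascents a ρ = L} ≤
      pairingCount {x // g x = x} * g.support.card ^ L.card := by
  have hcard : Nat.card (L → g.support) = g.support.card ^ L.card := by
    rw [Nat.card_fun, Nat.card_eq_fintype_card, Nat.card_eq_fintype_card, Fintype.card_coe,
      Fintype.card_coe]
  rw [← hcard, pairingCount, ← Nat.card_prod]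
  refine Nat.card_le_card_of_injective (fun ρ =>
    (⟨ρ.1.subtypePerm (apply_eq_self_iff_of_commute ρ.2.1.2),
      ρ.2.1.1.subtypePerm (apply_eq_self_iff_of_commute ρ.2.1.2)⟩,
     fun c => ⟨ρ.1 (a c), ?_⟩)) fun ρ ρ' heq => Subtype.ext (Equiv.ext fun x => ?_)
  · rw [← Equiv.Perm.cycleOf_mem_cycleFactorsFinset_iff,
      cycleOf_apply_mem_cycleFactorsFinset_iff ρ.2.1.2, a.cycleOf_eq]
    exact c.1.2
  obtain ⟨hfix, hval⟩ := Prod.ext_iff.mp heq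
  by_cases hx : g x = x
  · exact congrArg Subtype.val (DFunLike.congr_fun (congrArg Subtype.val hfix) ⟨x, hx⟩)
  · refine ρ.2.1.1.eq_of_ascents ρ'.2.1.1 ρ.2.1.2 ρ'.2.1.2 (ρ.2.2.trans ρ'.2.2.symm)
      (fun c hc => ?_) (Equiv.Perm.mem_support.mpr hx)
    exact congrArg Subtype.val (congrFun hval ⟨c, ρ.2.2 ▸ hc⟩)

end InvariantPairing

theorem invariantPairingCount_le {X : Type*} [Fintype X] [DecidableEq X] (g : Perm X) :
    invariantPairingCount g ≤ pairingCount {x // g x = x} *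
      g.support.card ^ (g.cycleType.card / 2) * 2 ^ g.cycleType.card := by
  classical
  obtain ⟨a⟩ := Equiv.Perm.Basis.nonempty g
  let _ : LinearOrder (Perm X) := LinearOrder.lift' _ (Fintype.equivFin (Perm X)).injective
  have hsets :
      (Finset.univ : Finset (Finset g.cycleFactorsFinset)).card = 2 ^ g.cycleType.card := by
    rw [Finset.card_univ, Fintype.card_finset, Fintype.card_coe,
      card_cycleType_eq_card_cycleFactorsFinset]
  rw [invariantPairingCount, Nat.card_eq_fintype_card, Fintype.card_subtype, ← hsets]
  refine Finset.card_le_mul_card_image_of_maps_to (f := ascents a) (fun _ _ => Finset.mem_univ _) _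
    fun L _ => ?_
  rw [Finset.filter_filter, ← Fintype.card_subtype, ← Nat.card_eq_fintype_card]
  rcases isEmpty_or_nonempty {ρ : Perm X // (IsPairing ρ ∧ Commute ρ g) ∧ ascents a ρ = L} with
    _ | ⟨ρ, ⟨hρ, h⟩, rfl⟩
  · exact Nat.card_of_isEmpty.trans_le (Nat.zero_le _)
  refine (card_invariant_pairings_with_ascents_le a _).trans (Nat.mul_le_mul_left _ ?_)
  have hle := hρ.two_mul_card_ascents_le h a
  rcases g.support.eq_empty_or_nonempty with hempty | hne
  · have : g.cycleType.card = 0 := by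
      rw [Equiv.Perm.card_cycleType_eq_zero, ← Equiv.Perm.support_eq_empty_iff, hempty]
    simp_all
  · exact Nat.pow_le_pow_right hne.card_pos (by omega)

/-! ### Cycles of a lift -/

section PermProdShear

theorem two_mul_card_cycleType_le {X : Type*} [Fintype X] [DecidableEq X] (g : Perm X) :
    2 * g.cycleType.card ≤ g.support.card := by
  rw [← Equiv.Perm.sum_cycleType, mul_comm, ← smul_eq_mul]
  exact Multiset.card_nsmul_le_sum fun _ => Equiv.Perm.two_le_of_mem_cycleType

theorem sameCycle_of_semiconj {X Y : Type*} [Finite X] {f : Perm X} {g : Perm Y} {θ : X → Y}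
    (hθ : Function.Semiconj θ f g) {x y : X} (h : f.SameCycle x y) :
    g.SameCycle (θ x) (θ y) := by
  obtain ⟨n, rfl⟩ := h.exists_nat_pow_eq
  refine ⟨n, ?_⟩
  rw [zpow_natCast, ← Equiv.Perm.iterate_eq_pow, ← Equiv.Perm.iterate_eq_pow,
    (hθ.iterate_right n).eq]

theorem exists_sameCycle_prodShear {V F : Type*} [Finite V] {σ : Perm V}
    (τ : V → Perm F) {u v : V} (h : σ.SameCycle u v) (i : F) :
    ∃ j, Equiv.Perm.SameCycle (σ.prodShear τ) (u, j) (v, i) := by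
  obtain ⟨n, hn⟩ := h.symm.exists_nat_pow_eq
  have hsemi : Function.Semiconj Prod.fst (σ.prodShear τ) σ := fun _ => rfl
  rw [← Equiv.Perm.iterate_eq_pow] at hn
  refine ⟨((σ.prodShear τ)^[n] (v, i)).2, Equiv.Perm.SameCycle.symm ⟨n, ?_⟩⟩
  rw [zpow_natCast, ← Equiv.Perm.iterate_eq_pow]
  exact Prod.ext ((hsemi.iterate_right n (v, i)).trans hn) rfl

variable {V F : Type*} [Fintype V] [DecidableEq V] [Fintype F] [DecidableEq F]

theorem mem_support_prodShear_iff {σ : Perm V} {τ : V → Perm F} {x : V × F} :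
    x ∈ Equiv.Perm.support (σ.prodShear τ) ↔
      x.1 ∈ σ.support ∨ σ x.1 = x.1 ∧ x.2 ∈ (τ x.1).support := by
  simp only [Equiv.Perm.mem_support, ne_eq, Prod.ext_iff, Equiv.prodShear_apply]
  tauto

theorem card_support_prodShear (σ : Perm V) (τ : V → Perm F) :
    (Equiv.Perm.support (σ.prodShear τ)).card =
      Fintype.card F * σ.support.card + ∑ v with σ v = v, (τ v).support.card := by
  have hcount (v : V) : (∑ i, if (v, i) ∈ Equiv.Perm.support (σ.prodShear τ) then 1 else 0) =
      if σ v = v then (τ v).support.card else Fintype.card F := by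
    simp only [Finset.sum_boole, Equiv.Perm.mem_support]
    split_ifs with hv <;> simp [hv, Equiv.Perm.support, Finset.card_univ]
  have hsupp : σ.support = ({v | ¬σ v = v} : Finset V) := rfl
  rw [← Finset.filter_univ_mem (Equiv.Perm.support _), Finset.card_filter, Fintype.sum_prod_type]
  simp only [hcount, Finset.sum_ite, Finset.sum_const, smul_eq_mul, hsupp]
  ring

theorem card_cycleType_prodShear_le (σ : Perm V) (τ : V → Perm F) :
    (Equiv.Perm.cycleType (σ.prodShear τ)).card ≤
      Fintype.card F * σ.cycleType.card + ∑ v with σ v = v, (τ v).cycleType.card := by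
  obtain ⟨a⟩ := Equiv.Perm.Basis.nonempty σ
  let b (v : V) := (Equiv.Perm.Basis.nonempty (τ v)).some
  let cycle := Equiv.Perm.cycleOf (σ.prodShear τ)
  let moved : Finset (Perm (V × F)) :=
    Finset.univ.image fun x : σ.cycleFactorsFinset × F => cycle (a x.1, x.2)
  let fixed (v : V) : Finset (Perm (V × F)) := Finset.univ.image fun d => cycle (v, b v d)
  have hmoved : moved.card ≤ Fintype.card F * σ.cycleType.card := by
    refine Finset.card_image_le.trans_eq ?_
    simp [card_cycleType_eq_card_cycleFactorsFinset, mul_comm]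
  have hfixed (v : V) : (fixed v).card ≤ (τ v).cycleType.card := by
    refine Finset.card_image_le.trans_eq ?_
    simp [card_cycleType_eq_card_cycleFactorsFinset]
  have hsub : Equiv.Perm.cycleFactorsFinset (σ.prodShear τ) ⊆
      moved ∪ Finset.biUnion {v | σ v = v} fixed := by
    intro c hc
    obtain ⟨⟨v, i⟩, hx⟩ := (Equiv.Perm.mem_cycleFactorsFinset_iff.mp hc).1.nonempty_support
    rw [Equiv.Perm.cycle_is_cycleOf hx hc, Finset.mem_union, Finset.mem_biUnion]
    rcases mem_support_prodShear_iff.mp (Equiv.Perm.mem_cycleFactorsFinset_support_le hc hx) with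
      hv | ⟨hv, hi⟩
    · have hmem := Equiv.Perm.cycleOf_mem_cycleFactorsFinset_iff.mpr hv
      obtain ⟨j, hj⟩ := exists_sameCycle_prodShear τ (a.sameCycle hmem) i
      exact Or.inl (Finset.mem_image.mpr ⟨(⟨_, hmem⟩, j), Finset.mem_univ _, hj.cycleOf_eq⟩)
    · have hmem := Equiv.Perm.cycleOf_mem_cycleFactorsFinset_iff.mpr hi
      have hsemi : Function.Semiconj (Prod.mk v) (τ v) (σ.prodShear τ) := fun i =>
        Prod.ext hv.symm rfl
      have hcycle := sameCycle_of_semiconj hsemi ((b v).sameCycle hmem)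
      exact Or.inr ⟨v, Finset.mem_filter_univ _ |>.mpr hv,
        Finset.mem_image.mpr ⟨⟨_, hmem⟩, Finset.mem_univ _, hcycle.cycleOf_eq⟩⟩
  calc (Equiv.Perm.cycleType (σ.prodShear τ)).card
      = (Equiv.Perm.cycleFactorsFinset (σ.prodShear τ)).card := by
        rw [card_cycleType_eq_card_cycleFactorsFinset]
    _ ≤ moved.card + (Finset.biUnion {v | σ v = v} fixed).card :=
        (Finset.card_le_card hsub).trans (Finset.card_union_le _ _)
    _ ≤ _ := add_le_add hmoved <|
        Finset.card_biUnion_le.trans (Finset.sum_le_sum fun v _ => hfixed v)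

end PermProdShear

section Twisted

variable {V : Type*} [Fintype V] [DecidableEq V]

/-- The fixed points of `σ` over which the shear of `V × Fin 3` given by `τ` is nontrivial. -/
def twisted (σ : Perm V) (τ : V → Perm (Fin 3)) : Finset V := {v | σ v = v ∧ τ v ≠ 1}

variable (σ : Perm V) (τ : V → Perm (Fin 3))

theorem sum_fixed_eq_sum_twisted {f : Perm (Fin 3) → ℕ} (hf : f 1 = 0) :
    ∑ v with σ v = v, f (τ v) = ∑ v ∈ twisted σ τ, f (τ v) := by
  rw [twisted, ← Finset.filter_filter]
  exact (Finset.sum_filter_of_ne (p := fun v => τ v ≠ 1) fun v _ hv hτ => hv (hτ ▸ hf)).symm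

theorem le_card_support_prodShear :
    3 * σ.support.card + 2 * (twisted σ τ).card ≤
      (Equiv.Perm.support (σ.prodShear τ)).card := by
  rw [card_support_prodShear, Fintype.card_fin, mul_comm 2, ← smul_eq_mul (twisted σ τ).card,
    sum_fixed_eq_sum_twisted σ τ (f := fun t => t.support.card) (by simp)]
  gcongr
  exact Finset.card_nsmul_le_sum _ _ _ fun v hv =>
    Equiv.Perm.two_le_card_support_of_ne_one (Finset.mem_filter.mp hv).2.2

theorem card_support_prodShear_le :
    (Equiv.Perm.support (σ.prodShear τ)).card ≤
      3 * (σ.support.card + (twisted σ τ).card) := by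
  rw [card_support_prodShear, Fintype.card_fin, mul_add, mul_comm 3 (twisted σ τ).card,
    ← smul_eq_mul (twisted σ τ).card,
    sum_fixed_eq_sum_twisted σ τ (f := fun t => t.support.card) (by simp)]
  gcongr
  exact Finset.sum_le_card_nsmul _ _ _ fun v _ => card_finset_fin_le _

theorem card_cycleType_prodShear_fin_three_le :
    (Equiv.Perm.cycleType (σ.prodShear τ)).card ≤
      3 * σ.cycleType.card + (twisted σ τ).card := by
  refine (card_cycleType_prodShear_le σ τ).trans ?_
  rw [Fintype.card_fin, ← smul_eq_mul 3, ← mul_one (twisted σ τ).card,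
    ← smul_eq_mul (twisted σ τ).card,
    sum_fixed_eq_sum_twisted σ τ (f := fun t => t.cycleType.card) (by simp)]
  gcongr
  refine Finset.sum_le_card_nsmul _ _ _ fun v _ => ?_
  have := two_mul_card_cycleType_le (τ v)
  have := card_finset_fin_le (τ v).support
  omega

end Twisted

section ShearBounds

variable {V : Type*} [Fintype V] [DecidableEq V] {σ : Perm V}

theorem pow_half_le_sqrt_pow {t r : ℕ} (ht : 1 ≤ t) : ((t ^ (r / 2) : ℕ) : ℝ) ≤ √t ^ r := by
  have hone : 1 ≤ √(t : ℝ) := one_le_sqrt.mpr (by exact_mod_cast ht)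
  calc ((t ^ (r / 2) : ℕ) : ℝ) = √t ^ (2 * (r / 2)) := by
        rw [pow_mul, sq_sqrt t.cast_nonneg, Nat.cast_pow]
    _ ≤ √t ^ r := pow_le_pow_right₀ hone (Nat.mul_div_le r 2)

theorem pairingCount_fixed_prodShear_le (hV : Even (Fintype.card V)) (τ : V → Perm (Fin 3)) :
    (pairingCount {x // σ.prodShear τ x = x} : ℝ) ≤ pairingCount (V × Fin 3) *
      √(2 / Fintype.card V) ^ (Equiv.Perm.support (σ.prodShear τ)).card := by
  obtain ⟨n, hn⟩ := hV
  have hcard : Nat.card (V × Fin 3) = 2 * (3 * n) := by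
    rw [Nat.card_prod, Nat.card_eq_fintype_card, Nat.card_fin, hn]
    ring
  have hfixed : Nat.card {x // σ.prodShear τ x = x} +
      (Equiv.Perm.support (σ.prodShear τ)).card = 2 * (3 * n) := by
    rw [← hcard, Nat.card_eq_fintype_card, Nat.card_eq_fintype_card, Fintype.card_subtype,
      Equiv.Perm.support]
    exact Finset.card_filter_add_card_filter_not _
  have hratio : (3 / (3 * n : ℕ) : ℝ) = 2 / Fintype.card V := by
    rw [hn]
    push_cast
    rw [← two_mul, div_mul_cancel_left₀ three_ne_zero, div_mul_cancel_left₀ two_ne_zero]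
  rw [← hratio]
  exact pairingCount_le_mul_sqrt_pow hcard hfixed

theorem invariantPairingCount_prodShear_le (hV : Even (Fintype.card V)) (hσ : σ ≠ 1)
    (τ : V → Perm (Fin 3)) :
    (invariantPairingCount (σ.prodShear τ) : ℝ) ≤ pairingCount (V × Fin 3) *
      (√(2 / Fintype.card V) ^ (3 * σ.support.card + 2 * (twisted σ τ).card) *
        (4 * √(σ.support.card + (twisted σ τ).card)) ^
          (3 * σ.cycleType.card + (twisted σ τ).card)) := by
  set s := σ.support.card
  set j := (twisted σ τ).card
  set t := (Equiv.Perm.support (σ.prodShear τ)).card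
  set r := (Equiv.Perm.cycleType (σ.prodShear τ)).card
  have hs : 2 ≤ s := Equiv.Perm.two_le_card_support_of_ne_one hσ
  have hone : 1 ≤ √((s : ℝ) + j) := one_le_sqrt.mpr (by exact_mod_cast (by omega : 1 ≤ s + j))
  have hle_one : √(2 / (Fintype.card V : ℝ)) ≤ 1 := by
    refine sqrt_le_one.mpr (div_le_one_of_le₀ ?_ (Nat.cast_nonneg _))
    exact_mod_cast hs.trans (Finset.card_le_univ _)
  have hlower : 3 * s + 2 * j ≤ t := le_card_support_prodShear σ τ
  have hupper : √(t : ℝ) ≤ 2 * √(s + j) := by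
    have ht : (t : ℝ) ≤ 3 * (s + j) := by exact_mod_cast card_support_prodShear_le σ τ
    rw [sqrt_le_left (by positivity), mul_pow, sq_sqrt (by positivity)]
    linarith [s.cast_nonneg (α := ℝ), j.cast_nonneg (α := ℝ)]
  have hcycles : r ≤ 3 * σ.cycleType.card + j := card_cycleType_prodShear_fin_three_le σ τ
  calc (invariantPairingCount (σ.prodShear τ) : ℝ)
      ≤ pairingCount {x // σ.prodShear τ x = x} * (t ^ (r / 2) : ℕ) * 2 ^ r := by
        exact_mod_cast invariantPairingCount_le (σ.prodShear τ)
    _ ≤ (pairingCount (V × Fin 3) * √(2 / Fintype.card V) ^ t) * √t ^ r * 2 ^ r := by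
        gcongr
        · exact pairingCount_fixed_prodShear_le hV τ
        · exact pow_half_le_sqrt_pow (by omega)
    _ = pairingCount (V × Fin 3) * (√(2 / Fintype.card V) ^ t * (2 * √t) ^ r) := by ring
    _ ≤ _ := by
        gcongr ?_ * (?_ * ?_)
        · exact pow_le_pow_of_le_one (by positivity) hle_one hlower
        · calc (2 * √(t : ℝ)) ^ r ≤ (4 * √((s : ℝ) + j)) ^ r :=
                pow_le_pow_left₀ (by positivity) (by linarith) r
            _ ≤ _ := pow_le_pow_right₀ (by linarith) hcycles

theorem card_twisted_eq_le (J : Finset V) :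
    ({τ : V → Perm (Fin 3) | twisted σ τ = J} : Finset _).card ≤ 6 ^ (σ.support.card + J.card) := by
  have eq_one {τ : V → Perm (Fin 3)} (hτ : twisted σ τ = J) {v : V} (hv : v ∉ σ.support ∪ J) :
      τ v = 1 := by
    by_contra hne
    refine hv (Finset.mem_union.mpr (or_iff_not_imp_left.mpr fun hfix => ?_))
    rw [← hτ, twisted, Finset.mem_filter_univ]
    exact ⟨Equiv.Perm.notMem_support.mp hfix, hne⟩
  calc ({τ : V → Perm (Fin 3) | twisted σ τ = J} : Finset _).card
      ≤ Fintype.card ((σ.support ∪ J : Finset V) → Perm (Fin 3)) := by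
        refine Finset.card_le_card_of_injOn (fun τ v => τ v) (fun _ _ => Finset.mem_univ _) ?_
        intro τ hτ τ' hτ' heq
        funext v
        by_cases hv : v ∈ σ.support ∪ J
        · exact congrFun heq ⟨v, hv⟩
        · rw [eq_one (Finset.mem_filter.mp hτ).2 hv,
            eq_one (Finset.mem_filter.mp hτ').2 hv]
    _ = 6 ^ (σ.support ∪ J).card := by
        rw [Fintype.card_fun, Fintype.card_perm, Fintype.card_fin, Fintype.card_coe]
        rfl
    _ ≤ _ := Nat.pow_le_pow_right (by norm_num) (Finset.card_union_le _ _)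

theorem sum_card_twisted_le (σ : Perm V) {b : ℕ → ℝ} (hb : ∀ j, 0 ≤ b j) :
    ∑ τ : V → Perm (Fin 3), b (twisted σ τ).card ≤
      ∑ j ∈ Finset.range (Fintype.card V + 1),
        (Fintype.card V).choose j * (6 ^ (σ.support.card + j) * b j) := by
  calc ∑ τ : V → Perm (Fin 3), b (twisted σ τ).card
      = ∑ J : Finset V, ∑ τ with twisted σ τ = J, b J.card := by
        rw [← Finset.sum_fiberwise _ (twisted σ)]
        refine Finset.sum_congr rfl fun J _ => Finset.sum_congr rfl fun τ hτ => ?_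
        rw [(Finset.mem_filter.mp hτ).2]
    _ ≤ ∑ J : Finset V, 6 ^ (σ.support.card + J.card) * b J.card := by
        refine Finset.sum_le_sum fun J _ => ?_
        rw [Finset.sum_const, nsmul_eq_mul]
        gcongr
        · exact hb _
        · exact_mod_cast card_twisted_eq_le J
    _ = _ := by
        rw [← Finset.powerset_univ,
          Finset.sum_powerset_apply_card fun j => 6 ^ (σ.support.card + j) * b j, Finset.card_univ]
        simp only [nsmul_eq_mul]

end ShearBounds

/-! ### Estimates -/

section RealEstimates

theorem exp_natCast_le_three_pow (n : ℕ) : exp n ≤ 3 ^ n := by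
  rw [← exp_one_pow]
  exact pow_le_pow_left₀ (exp_pos 1).le exp_one_lt_three.le n

theorem pow_le_factorial_mul_exp {x : ℝ} (hx : 0 ≤ x) (n : ℕ) : x ^ n ≤ n ! * exp x := by
  rw [← div_le_iff₀' (by positivity)]
  exact pow_div_factorial_le_exp x hx n

theorem sq_sqrt_pow {x : ℝ} (hx : 0 ≤ x) (n : ℕ) : (√x ^ n) ^ 2 = x ^ n := by
  rw [pow_right_comm, sq_sqrt hx]

theorem sqrt_add_pow_le_sqrt_pow_mul {s j n : ℕ} (hn : n ≤ 2 * s) :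
    √((s : ℝ) + j) ^ n ≤ √(s : ℝ) ^ n * 3 ^ j := by
  rcases s.eq_zero_or_pos with rfl | hs
  · obtain rfl : n = 0 := by omega
    simpa using one_le_pow₀ (by norm_num : (1 : ℝ) ≤ 3)
  refine le_of_sq_le_sq ?_ (by positivity)
  rw [mul_pow, sq_sqrt_pow (by positivity), sq_sqrt_pow (by positivity)]
  have hs' : (0 : ℝ) < s := Nat.cast_pos.mpr hs
  have hexp : (s : ℝ) + j ≤ s * exp (j / s) := by
    calc (s : ℝ) + j = s * (j / s + 1) := by field_simp; ring
      _ ≤ _ := by gcongr; exact add_one_le_exp _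
  calc ((s : ℝ) + j) ^ n ≤ (s * exp (j / s)) ^ n := by gcongr
    _ = s ^ n * exp (n * (j / s)) := by rw [mul_pow, exp_nat_mul]
    _ ≤ s ^ n * exp ((2 * j : ℕ)) := by
      gcongr
      have hn' : (n : ℝ) ≤ 2 * s := by exact_mod_cast hn
      rw [← mul_div_assoc, div_le_iff₀ hs']
      push_cast
      nlinarith [j.cast_nonneg (α := ℝ)]
    _ ≤ s ^ n * (3 ^ j) ^ 2 := by
      rw [← pow_mul, mul_comm j]
      gcongr
      exact exp_natCast_le_three_pow _

theorem sqrt_add_pow_le_sqrt_factorial_mul (s j : ℕ) :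
    √((s : ℝ) + j) ^ j ≤ √(j ! : ℝ) * 3 ^ (s + j) := by
  refine le_of_sq_le_sq ?_ (by positivity)
  rw [mul_pow, sq_sqrt_pow (by positivity), sq_sqrt (by positivity)]
  calc ((s : ℝ) + j) ^ j ≤ j ! * exp (s + j : ℕ) := by
        exact_mod_cast pow_le_factorial_mul_exp (by positivity : 0 ≤ (s : ℝ) + j) j
    _ ≤ j ! * (3 ^ (s + j)) ^ 2 := by
        gcongr
        exact (exp_natCast_le_three_pow _).trans
          (le_self_pow₀ (one_le_pow₀ (by norm_num)) two_ne_zero)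

theorem pow_div_sqrt_factorial_le (a : ℝ) (j : ℕ) :
    a ^ j / √(j ! : ℝ) ≤ exp (2 * a ^ 2) * (1 / 2) ^ j := by
  have hdouble : (2 * a) ^ j ≤ √(j ! : ℝ) * exp (2 * a ^ 2) := by
    refine le_of_sq_le_sq ?_ (by positivity)
    rw [mul_pow √_, sq_sqrt (by positivity), pow_right_comm, ← exp_nat_mul]
    have harg : ((2 : ℕ) : ℝ) * (2 * a ^ 2) = (2 * a) ^ 2 := by push_cast; ring
    rw [harg]
    exact pow_le_factorial_mul_exp (sq_nonneg (2 * a)) j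
  rw [div_le_iff₀ (by positivity)]
  calc a ^ j = (2 * a) ^ j * (1 / 2) ^ j := by rw [← mul_pow]; ring
    _ ≤ (√(j ! : ℝ) * exp (2 * a ^ 2)) * (1 / 2) ^ j := by gcongr
    _ = _ := by ring

theorem sum_one_half_pow_le_two (s : Finset ℕ) : ∑ n ∈ s, (1 / 2 : ℝ) ^ n ≤ 2 :=
  (summable_geometric_two.sum_le_tsum s fun _ _ => by positivity).trans_eq tsum_geometric_two

theorem sum_pow_div_sqrt_factorial_le (a : ℝ) (s : Finset ℕ) :
    ∑ j ∈ s, a ^ j / √(j ! : ℝ) ≤ 2 * exp (2 * a ^ 2) := by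
  calc ∑ j ∈ s, a ^ j / √(j ! : ℝ) ≤ ∑ j ∈ s, exp (2 * a ^ 2) * (1 / 2) ^ j :=
        Finset.sum_le_sum fun j _ => pow_div_sqrt_factorial_le a j
    _ ≤ exp (2 * a ^ 2) * 2 := by
        rw [← Finset.mul_sum]
        gcongr
        exact sum_one_half_pow_le_two s
    _ = _ := mul_comm _ _

end RealEstimates

section ShearSum

theorem choose_mul_shear_bound_le {N s j k : ℕ} (hk : 2 * k ≤ s) :
    (N.choose j : ℝ) * (6 ^ (s + j) *
      (√(2 / N) ^ (3 * s + 2 * j) * (4 * √(s + j)) ^ (3 * k + j))) ≤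
      144 ^ s * √(2 / N) ^ (3 * s) * √s ^ (3 * k) * (432 ^ j / √(j ! : ℝ)) := by
  have hchoose : (N.choose j : ℝ) * √(2 / N) ^ (2 * j) ≤ 2 ^ j / j ! := by
    rcases eq_or_ne (N : ℝ) 0 with hN | hN
    · rw [Nat.cast_eq_zero.mp hN]
      cases j with
      | zero => simp
      | succ j => simpa using by positivity
    calc (N.choose j : ℝ) * √(2 / N) ^ (2 * j) ≤ N ^ j / j ! * (2 / N) ^ j := by
          rw [pow_mul, sq_sqrt (by positivity)]
          gcongr
          exact Nat.choose_le_pow_div j N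
      _ = 2 ^ j / j ! := by rw [div_pow]; field_simp
  have hfour : (4 : ℝ) ^ (3 * k) ≤ 8 ^ s := by
    calc (4 : ℝ) ^ (3 * k) = 8 ^ (2 * k) := by rw [pow_mul, pow_mul]; norm_num
      _ ≤ 8 ^ s := pow_le_pow_right₀ (by norm_num) hk
  have hsqrt : √(j ! : ℝ) / j ! = 1 / √(j ! : ℝ) := sqrt_div_self'
  calc (N.choose j : ℝ) * (6 ^ (s + j) *
      (√(2 / N) ^ (3 * s + 2 * j) * (4 * √(s + j)) ^ (3 * k + j)))
      = 6 ^ (s + j) * √(2 / N) ^ (3 * s) * (N.choose j * √(2 / N) ^ (2 * j)) *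
          (4 ^ (3 * k) * 4 ^ j * √(s + j) ^ (3 * k) * √(s + j) ^ j) := by ring
    _ ≤ 6 ^ (s + j) * √(2 / N) ^ (3 * s) * (2 ^ j / j !) *
          (8 ^ s * 4 ^ j * (√s ^ (3 * k) * 3 ^ j) * (√(j ! : ℝ) * 3 ^ (s + j))) := by
        gcongr
        · exact sqrt_add_pow_le_sqrt_pow_mul (by omega)
        · exact sqrt_add_pow_le_sqrt_factorial_mul s j
    _ = 6 ^ s * 8 ^ s * 3 ^ s * √(2 / N) ^ (3 * s) * √s ^ (3 * k) *
          (6 ^ j * 2 ^ j * 4 ^ j * 3 ^ j * 3 ^ j * (√(j ! : ℝ) / j !)) := by ring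
    _ = _ := by
        simp only [← mul_pow, hsqrt, mul_one_div]
        norm_num

theorem sum_invariantPairingCount_prodShear_le {V : Type*} [Fintype V] [DecidableEq V]
    {σ : Perm V} (hV : Even (Fintype.card V)) (hσ : σ ≠ 1) :
    ∑ τ : V → Perm (Fin 3), (invariantPairingCount (σ.prodShear τ) : ℝ) ≤
      pairingCount (V × Fin 3) * (2 * exp (2 * 432 ^ 2) * (144 ^ σ.support.card *
        √(2 / Fintype.card V) ^ (3 * σ.support.card) *
        √σ.support.card ^ (3 * σ.cycleType.card))) := by
  set s := σ.support.card
  set k := σ.cycleType.card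
  set N := Fintype.card V
  have hk : 2 * k ≤ s := two_mul_card_cycleType_le σ
  let b (j : ℕ) : ℝ := √(2 / N) ^ (3 * s + 2 * j) * (4 * √(s + j)) ^ (3 * k + j)
  calc ∑ τ : V → Perm (Fin 3), (invariantPairingCount (σ.prodShear τ) : ℝ)
      ≤ ∑ τ : V → Perm (Fin 3), pairingCount (V × Fin 3) * b (twisted σ τ).card :=
        Finset.sum_le_sum fun τ _ => invariantPairingCount_prodShear_le hV hσ τ
    _ = pairingCount (V × Fin 3) * ∑ τ : V → Perm (Fin 3), b (twisted σ τ).card := by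
        rw [Finset.mul_sum]
    _ ≤ pairingCount (V × Fin 3) *
          ∑ j ∈ Finset.range (N + 1), 144 ^ s * √(2 / N) ^ (3 * s) * √s ^ (3 * k) *
            (432 ^ j / √(j ! : ℝ)) := by
        gcongr
        refine (sum_card_twisted_le σ fun j => by positivity).trans ?_
        exact Finset.sum_le_sum fun j _ => choose_mul_shear_bound_le hk
    _ ≤ _ := by
        rw [← Finset.mul_sum, mul_comm (2 * exp _)]
        gcongr
        exact sum_pow_div_sqrt_factorial_le _ _

end ShearSum

/-! ### Summation over permutations of prime order -/

section PrimeOrder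

variable {V : Type*} [Fintype V] [DecidableEq V]

theorem card_cycleType_eq_replicate_mul_le {p k : ℕ} (hk : k ≠ 0) :
    ({σ | σ.cycleType = Multiset.replicate k p} : Finset (Perm V)).card * (p ^ k * k !) ≤
      Fintype.card V ^ (p * k) := by
  have h := Equiv.Perm.card_of_cycleType_mul_eq V (Multiset.replicate k p)
  simp only [Multiset.sum_replicate, Multiset.prod_replicate, smul_eq_mul, mul_comm k p,
    Multiset.toFinset_replicate, hk, if_false, Finset.prod_singleton,
    Multiset.count_replicate_self] at h
  refine Nat.le_of_mul_le_mul_left ?_ (Nat.factorial_pos (Fintype.card V - p * k))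
  rw [mul_left_comm, ← mul_assoc _ (p ^ k), h]
  split_ifs with hcond
  · rw [← Nat.factorial_mul_descFactorial hcond.1]
    exact Nat.mul_le_mul_left _ (Nat.descFactorial_le_pow _ _)
  · exact Nat.zero_le _

theorem card_cycleType_eq_replicate_mul_pow_le {p k : ℕ} (hp : p ≠ 0) (hk : k ≠ 0) :
    (({σ | σ.cycleType = Multiset.replicate k p} : Finset (Perm V)).card : ℝ) *
      (p * k : ℕ) ^ k ≤ (Fintype.card V : ℝ) ^ (p * k) * 3 ^ (p * k) := by
  set c := ({σ | σ.cycleType = Multiset.replicate k p} : Finset (Perm V)).card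
  calc (c : ℝ) * (p * k : ℕ) ^ k = c * (p ^ k * (k : ℝ) ^ k) := by rw [Nat.cast_mul, mul_pow]
    _ ≤ c * (p ^ k * (k ! * 3 ^ k)) := by
        gcongr
        refine (pow_le_factorial_mul_exp k.cast_nonneg k).trans ?_
        gcongr
        exact exp_natCast_le_three_pow k
    _ = (c * (p ^ k * k !) : ℕ) * 3 ^ k := by push_cast; ring
    _ ≤ (Fintype.card V : ℝ) ^ (p * k) * 3 ^ (p * k) := by
        gcongr
        · exact_mod_cast card_cycleType_eq_replicate_mul_le hk
        · norm_num
        · exact Nat.le_mul_of_pos_left k (Nat.pos_of_ne_zero hp)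

theorem mul_shear_bound_le {N s k : ℕ} {c : ℝ} (hc : 0 ≤ c) (hs : s ≠ 0) (hsN : s ≤ N)
    (hk : 2 * k ≤ s) (h : c * s ^ k ≤ (N : ℝ) ^ s * 3 ^ s) :
    c * (144 ^ s * √(2 / N) ^ (3 * s) * √s ^ (3 * k)) ≤ (1728 / √√N) ^ s := by
  have hN : (1 : ℝ) ≤ N := by exact_mod_cast (Nat.one_le_iff_ne_zero.mpr hs).trans hsN
  set q := √√(N : ℝ)
  have hqsq : q ^ 2 = √N := sq_sqrt (sqrt_nonneg _)
  have hqfour : q ^ 4 = N := by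
    rw [← sq_sqrt (zero_le_one.trans hN), ← hqsq, ← pow_mul]
  have hqone : 1 ≤ q := one_le_sqrt.mpr (one_le_sqrt.mpr hN)
  have hsqrt_s : √(s : ℝ) ^ (3 * k) ≤ s ^ k * q ^ s := by
    calc √(s : ℝ) ^ (3 * k) = (√s ^ 2) ^ k * √s ^ k := by rw [← pow_mul, ← pow_add]; ring_nf
      _ = s ^ k * √s ^ k := by rw [sq_sqrt s.cast_nonneg]
      _ ≤ s ^ k * √N ^ k := by gcongr
      _ = s ^ k * q ^ (2 * k) := by rw [← hqsq, ← pow_mul]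
      _ ≤ s ^ k * q ^ s := by gcongr
  have hsqrt_N : √(2 / (N : ℝ)) ^ (3 * s) ≤ (4 / q ^ 6) ^ s := by
    have hle : √(2 / (N : ℝ)) ≤ 2 / q ^ 2 := by
      rw [sqrt_le_left (by positivity), div_pow, ← pow_mul, hqfour]
      gcongr
      norm_num
    rw [pow_mul]
    gcongr
    calc √(2 / (N : ℝ)) ^ 3 = √(2 / N) ^ 2 * √(2 / N) := pow_succ _ 2
      _ = 2 / q ^ 4 * √(2 / N) := by rw [sq_sqrt (by positivity), hqfour]
      _ ≤ 2 / q ^ 4 * (2 / q ^ 2) := by gcongr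
      _ = 4 / q ^ 6 := by ring
  calc c * (144 ^ s * √(2 / N) ^ (3 * s) * √s ^ (3 * k))
      ≤ c * (144 ^ s * (4 / q ^ 6) ^ s * (s ^ k * q ^ s)) := by gcongr
    _ = (c * s ^ k) * (144 ^ s * (4 / q ^ 6) ^ s * q ^ s) := by ring
    _ ≤ (N ^ s * 3 ^ s) * (144 ^ s * (4 / q ^ 6) ^ s * q ^ s) := by gcongr
    _ = (q ^ 4 * 3 * (144 * (4 / q ^ 6) * q)) ^ s := by simp only [hqfour, mul_pow]
    _ = (1728 / q) ^ s := by
        congr 1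
        field_simp
        norm_num

theorem sum_cycleType_invariantPairingCount_le (hV : Even (Fintype.card V)) {p k : ℕ}
    (hp : 2 ≤ p) (hk : k ≠ 0) :
    ∑ σ : Perm V with σ.cycleType = Multiset.replicate k p,
      ∑ τ : V → Perm (Fin 3), (invariantPairingCount (σ.prodShear τ) : ℝ) ≤
      pairingCount (V × Fin 3) *
        (2 * exp (2 * 432 ^ 2) * (1728 / √√(Fintype.card V)) ^ (p * k)) := by
  set S : Finset (Perm V) := {σ | σ.cycleType = Multiset.replicate k p}
  have hcard (σ) (hσ : σ ∈ S) : σ.cycleType.card = k := by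
    rw [(Finset.mem_filter.mp hσ).2, Multiset.card_replicate]
  have hsupport (σ) (hσ : σ ∈ S) : σ.support.card = p * k := by
    rw [← σ.sum_cycleType, (Finset.mem_filter.mp hσ).2, Multiset.sum_replicate, smul_eq_mul,
      mul_comm]
  rcases S.eq_empty_or_nonempty with hempty | ⟨σ₀, hσ₀⟩
  · rw [hempty, Finset.sum_empty]
    positivity
  have hle : p * k ≤ Fintype.card V := hsupport σ₀ hσ₀ ▸ Finset.card_le_univ _
  set B : ℝ := 144 ^ (p * k) * √(2 / Fintype.card V) ^ (3 * (p * k)) * √(p * k : ℕ) ^ (3 * k)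
  calc _ ≤ ∑ σ ∈ S, pairingCount (V × Fin 3) * (2 * exp (2 * 432 ^ 2) * B) := by
        refine Finset.sum_le_sum fun σ hσ => ?_
        have hne : σ ≠ 1 := fun h => hk (by rw [← hcard σ hσ, h]; simp)
        simpa only [hsupport σ hσ, hcard σ hσ] using sum_invariantPairingCount_prodShear_le hV hne
    _ = pairingCount (V × Fin 3) * (2 * exp (2 * 432 ^ 2) * (S.card * B)) := by
        rw [Finset.sum_const, nsmul_eq_mul]
        ring
    _ ≤ _ := by
        gcongr
        exact mul_shear_bound_le S.card.cast_nonneg (by positivity) hle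
          (Nat.mul_le_mul_right k hp)
          (card_cycleType_eq_replicate_mul_pow_le (by omega) hk)

theorem pow_mul_le_of_le_one_half {x : ℝ} (hx : 0 ≤ x) (hx' : x ≤ 1 / 2) {p k : ℕ}
    (hp : 2 ≤ p) (hk : 1 ≤ k) : x ^ (p * k) ≤ 8 * x ^ 2 * ((1 / 2) ^ p * (1 / 2) ^ k) := by
  obtain ⟨a, rfl⟩ := Nat.exists_eq_add_of_le hp
  obtain ⟨b, rfl⟩ := Nat.exists_eq_add_of_le hk
  calc x ^ ((2 + a) * (1 + b)) ≤ x ^ (2 + (a + b)) :=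
        pow_le_pow_of_le_one hx (by linarith) (by nlinarith)
    _ = x ^ 2 * x ^ (a + b) := pow_add _ _ _
    _ ≤ x ^ 2 * (1 / 2) ^ (a + b) := by gcongr
    _ = _ := by ring

theorem sum_prime_orderOf_le_sum_cycleType {f : Perm V → ℝ} (hf : ∀ σ, 0 ≤ f σ) :
    ∑ σ : Perm V with (orderOf σ).Prime, f σ ≤
      ∑ p ∈ Finset.Icc 2 (Fintype.card V), ∑ k ∈ Finset.Icc 1 (Fintype.card V),
        ∑ σ : Perm V with σ.cycleType = Multiset.replicate k p, f σ := by
  have hmaps : ∀ σ ∈ ({σ | (orderOf σ).Prime} : Finset (Perm V)),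
      (orderOf σ, σ.cycleType.card) ∈
        Finset.Icc 2 (Fintype.card V) ×ˢ Finset.Icc 1 (Fintype.card V) := by
    intro σ hσ
    have hprime : (orderOf σ).Prime := (Finset.mem_filter.mp hσ).2
    obtain ⟨n, hn⟩ := Equiv.Perm.cycleType_prime_order hprime
    have hle := σ.sum_cycleType_le
    rw [hn, Multiset.sum_replicate, smul_eq_mul] at hle
    rw [hn, Multiset.card_replicate, Finset.mem_product, Finset.mem_Icc, Finset.mem_Icc]
    exact ⟨⟨hprime.two_le, (Nat.le_mul_of_pos_left _ n.succ_pos).trans hle⟩, n.succ_pos,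
      (Nat.le_mul_of_pos_right _ hprime.pos).trans hle⟩
  rw [← Finset.sum_fiberwise_of_maps_to hmaps f, Finset.sum_product]
  refine Finset.sum_le_sum fun p _ => Finset.sum_le_sum fun k _ =>
    Finset.sum_le_sum_of_subset_of_nonneg ?_ fun σ _ _ => hf σ
  intro σ hσ
  obtain ⟨hprime, heq⟩ := Finset.mem_filter.mp hσ
  obtain ⟨rfl, rfl⟩ := Prod.mk.inj heq
  obtain ⟨n, hn⟩ := Equiv.Perm.cycleType_prime_order (Finset.mem_filter.mp hprime).2
  refine Finset.mem_filter.mpr ⟨Finset.mem_univ σ, ?_⟩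
  conv_lhs => rw [hn]
  rw [hn, Multiset.card_replicate]

theorem sum_prime_orderOf_invariantPairingCount_le (hV : Even (Fintype.card V))
    (hx : 1728 / √√(Fintype.card V) ≤ 1 / 2) :
    ∑ σ : Perm V with (orderOf σ).Prime,
      ∑ τ : V → Perm (Fin 3), (invariantPairingCount (σ.prodShear τ) : ℝ) ≤
      pairingCount (V × Fin 3) *
        (64 * exp (2 * 432 ^ 2) * (1728 / √√(Fintype.card V)) ^ 2) := by
  set x : ℝ := 1728 / √√(Fintype.card V)
  set P := (pairingCount (V × Fin 3) : ℝ)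
  set N := Fintype.card V
  calc _ ≤ ∑ p ∈ Finset.Icc 2 N, ∑ k ∈ Finset.Icc 1 N,
        P * (2 * exp (2 * 432 ^ 2) * (8 * x ^ 2 * ((1 / 2) ^ p * (1 / 2) ^ k))) := by
        refine (sum_prime_orderOf_le_sum_cycleType fun σ => by positivity).trans ?_
        refine Finset.sum_le_sum fun p hp => Finset.sum_le_sum fun k hk => ?_
        have hp : 2 ≤ p := (Finset.mem_Icc.mp hp).1
        have hk : 1 ≤ k := (Finset.mem_Icc.mp hk).1
        refine (sum_cycleType_invariantPairingCount_le hV hp (by omega)).trans ?_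
        gcongr
        exact pow_mul_le_of_le_one_half (by positivity) hx hp hk
    _ = P * (2 * exp (2 * 432 ^ 2) * (8 * x ^ 2 *
          ((∑ p ∈ Finset.Icc 2 N, (1 / 2) ^ p) * ∑ k ∈ Finset.Icc 1 N, (1 / 2) ^ k))) := by
        simp only [← Finset.mul_sum, Finset.sum_mul_sum]
    _ ≤ P * (2 * exp (2 * 432 ^ 2) * (8 * x ^ 2 * (2 * 2))) := by
        gcongr <;> exact sum_one_half_pow_le_two _
    _ = _ := by ring

end PrimeOrder

section Symmetric

theorem exists_prime_orderOf_of_invariant {V R : Type*} [Finite V] {m : V → V → R} {σ : Perm V}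
    (hσ : σ ≠ 1) (hm : ∀ u v, m (σ u) (σ v) = m u v) :
    ∃ g : Perm V, (orderOf g).Prime ∧ ∀ u v, m (g u) (g v) = m u v := by
  have hpow (n : ℕ) : ∀ u v, m ((σ ^ n) u) ((σ ^ n) v) = m u v := by
    induction n with
    | zero => simp
    | succ n ih => exact fun u v => (ih (σ u) (σ v)).trans (hm u v)
  refine ⟨σ ^ (orderOf σ / (orderOf σ).minFac), ?_, hpow _⟩
  rw [orderOf_pow_orderOf_div (orderOf_pos σ).ne' (Nat.minFac_dvd _)]
  exact Nat.minFac_prime (orderOf_eq_one_iff.not.mpr hσ)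

theorem card_symmetric_isCubic_le (N : ℕ) :
    Nat.card {m : Fin N → Fin N → ℕ // IsCubic m ∧
      ∃ σ : Perm (Fin N), σ ≠ 1 ∧ ∀ u v, m (σ u) (σ v) = m u v} ≤
      ∑ σ : Perm (Fin N) with (orderOf σ).Prime,
        Nat.card {m : Fin N → Fin N → ℕ // IsCubic m ∧ ∀ u v, m (σ u) (σ v) = m u v} := by
  have hfinite : (⋃ σ ∈ ({σ | (orderOf σ).Prime} : Finset (Perm (Fin N))),
      {m | IsCubic m ∧ ∀ u v, m (σ u) (σ v) = m u v}).Finite :=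
    finite_isCubic.subset (Set.iUnion₂_subset fun σ _ m hm => hm.1)
  refine (Set.ncard_le_ncard ?_ hfinite).trans (Finset.set_ncard_biUnion_le _ _)
  rintro m ⟨hcubic, σ, hσ, hm⟩
  obtain ⟨g, hg, hgm⟩ := exists_prime_orderOf_of_invariant hσ hm
  exact Set.mem_biUnion (Finset.mem_filter.mpr ⟨Finset.mem_univ g, hg⟩) ⟨hcubic, hgm⟩

theorem card_symmetric_isCubic_le_mul {N : ℕ} (hN : Even N) (hx : 1728 / √√(N : ℝ) ≤ 1 / 2) :
    (Nat.card {m : Fin N → Fin N → ℕ // IsCubic m ∧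
      ∃ σ : Perm (Fin N), σ ≠ 1 ∧ ∀ u v, m (σ u) (σ v) = m u v} : ℝ) ≤
      64 * exp (2 * 432 ^ 2) * (1728 / √√(N : ℝ)) ^ 2 *
        Nat.card {m : Fin N → Fin N → ℕ // IsCubic m} := by
  set bad := Nat.card {m : Fin N → Fin N → ℕ // IsCubic m ∧
    ∃ σ : Perm (Fin N), σ ≠ 1 ∧ ∀ u v, m (σ u) (σ v) = m u v}
  set total := Nat.card {m : Fin N → Fin N → ℕ // IsCubic m}
  set ε : ℝ := 64 * exp (2 * 432 ^ 2) * (1728 / √√(N : ℝ)) ^ 2 with hε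
  have hbad : (6 : ℝ) ^ N * bad ≤ ∑ σ : Perm (Fin N) with (orderOf σ).Prime,
      ∑ τ : Fin N → Perm (Fin 3), (invariantPairingCount (σ.prodShear τ) : ℝ) := by
    have h := Nat.mul_le_mul_left (6 ^ N) (card_symmetric_isCubic_le N)
    simp only [Finset.mul_sum, ← sum_invariantPairingCount_eq_mul_card_isCubic] at h
    exact_mod_cast h
  have htotal : (pairingCount (Fin N × Fin 3) : ℝ) ≤ 6 ^ N * total := by
    exact_mod_cast pairingCount_le_six_pow_mul_card_isCubic N
  have hsum := sum_prime_orderOf_invariantPairingCount_le (V := Fin N)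
    (by rwa [Fintype.card_fin]) (by rwa [Fintype.card_fin])
  rw [Fintype.card_fin, ← hε] at hsum
  refine le_of_mul_le_mul_left ?_ (by positivity : (0 : ℝ) < 6 ^ N)
  calc (6 : ℝ) ^ N * bad ≤ pairingCount (Fin N × Fin 3) * ε := hbad.trans hsum
    _ ≤ 6 ^ N * total * ε := by gcongr
    _ = 6 ^ N * (ε * total) := by ring

end Symmetric

/-- Theorem: the proportion of labelled cubic multigraphs on `Fin N` admitting a
nontrivial automorphism tends to `0` as `N → ∞` through even `N`. -/
theorem almost_all_cubic_multigraphs_asymmetric :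
    Tendsto
      (fun N : ℕ =>
        (Nat.card {m : Fin N → Fin N → ℕ // IsCubic m ∧
            ∃ σ : Equiv.Perm (Fin N), σ ≠ 1 ∧ ∀ u v, m (σ u) (σ v) = m u v} : ℝ) /
          (Nat.card {m : Fin N → Fin N → ℕ // IsCubic m} : ℝ))
      (atTop ⊓ 𝓟 {N : ℕ | Even N}) (𝓝 0) := by
  have hx : Tendsto (fun N : ℕ => 1728 / √√(N : ℝ)) atTop (𝓝 0) :=
    (tendsto_sqrt_atTop.comp
      (tendsto_sqrt_atTop.comp tendsto_natCast_atTop_atTop)).const_div_atTop _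
  have hbound : Tendsto (fun N : ℕ => 64 * exp (2 * 432 ^ 2) * (1728 / √√(N : ℝ)) ^ 2)
      atTop (𝓝 0) := by
    simpa using (hx.pow 2).const_mul (64 * exp (2 * 432 ^ 2))
  refine tendsto_of_tendsto_of_tendsto_of_le_of_le' tendsto_const_nhds
    (hbound.mono_left inf_le_left) (Eventually.of_forall fun N => by positivity) ?_
  rw [eventually_inf_principal]
  filter_upwards [hx.eventually_le_const one_half_pos] with N hN heven
  exact div_le_of_le_mul₀ (Nat.cast_nonneg _) (by positivity)
    (card_symmetric_isCubic_le_mul heven hN)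
end
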